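/- Let P ∈ ℤ[x] be a nonzero polynomial with deg P ≤ d and L(P) ≤ L, where L ≥ 3. Then |P(π)| ≥ exp{ −2·10⁶ · d · (log L + d log d) · (1 + log d) }. -/

import Mathlib

/-!
Integer polynomials are bounded from below at `2πi` by the method of interpolation determinants, and
the bound is then transferred to `π`.

Let `β ≠ 0` be a root of an irreducible `Q ∈ ℤ[X]`. The matrix with entries the coefficients of
`u ^ t` in `(s β + log (1 + u)) ^ i * (1 + u) ^ k`, with rows `(s, t)`, `s < S`, `t < T`, and
columns `(i, k)`, `i < n`, `k < K`, has full column rank once `K (n - 1) < S (T - K + 1)`: a column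
relation is a family of polynomials `P k` such that `∑ P k (s β + log (1 + u)) * (1 + u) ^ k`
vanishes to order `T` at `u = 0` for every `s < S`, which a Wronskian argument excludes. So some
maximal minor `Δ` is nonzero.

* Arithmetic. Up to a small denominator, `Δ` is the value at `β` of an integer polynomial of
  controlled degree and size. As it is nonzero, the resultant of that polynomial with `Q` is a
  nonzero integer, whence a lower bound for `|Δ|` in terms of the Mahler measure and the degree
  of `Q`.
* Analysis. Since `exp (2πi k s) = 1`, one has
  `(1 + u) ^ k = exp (k (s β + log (1 + u))) * exp (-k s (β - 2πi))`. Expanding both exponentials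
  factors the matrix through one indexed by `ℕ × ℕ`, and multilinearity of the determinant gives
  `|Δ| ≤ exp (-(n K)² / 2)` up to lower order factors as soon as `β` is very close to `2πi`.

With `n = 60 S`, `T = 61 K`, `S` of order `D (1 + log D)` for `D ≥ deg Q`, and `K` of order
`log M(Q) + deg Q * log S`, the two bounds contradict each other, so `β` is not too close to `2πi`.
Applying this to the root of `Q` nearest to `2πi`, and bounding `|Q' (β)|` below by the Liouville
inequality, gives a lower bound for `|Q (2πi)|`. It is multiplicative in `Q`, because the Mahler
measure is, and therefore extends to all nonzero integer polynomials of degree at most `D`.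

Finally, for `P` of degree `d`, the polynomial `4 ^ d * P (X / 2i) * P (-X / 2i)` has integer
coefficients and takes the value `4 ^ d * P π * P (-π)` at `2πi`.
-/

open Polynomial

/-- The length of an integer polynomial: the sum of the absolute values of its
coefficients. -/
noncomputable def polyLength (P : Polynomial ℤ) : ℝ :=
  ∑ i ∈ Finset.range (P.natDegree + 1), (|P.coeff i| : ℝ)

open scoped PowerSeries

/-! ### Denominators of the coefficients of powers of the logarithm -/

section Denominators

theorem one_le_factorization_choose {p i m N : ℕ} (hp : p.Prime) (hm : m < p ^ i)
    (hNm : N - m < p ^ i) (hN : p ^ i ≤ N) : 1 ≤ (N.choose m).factorization p := by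
  have hi : 1 ≤ i := by
    by_contra! hi
    obtain rfl : i = 0 := by omega
    rw [pow_zero] at hm hNm hN
    omega
  rw [Nat.factorization_choose hp (hm.le.trans hN) (Nat.lt_succ_self _)]
  refine Finset.card_pos.mpr ⟨i, Finset.mem_filter.mpr ⟨Finset.mem_Ico.mpr ⟨hi, ?_⟩, ?_⟩⟩
  · exact Nat.lt_succ_of_le (Nat.le_log_of_pow_le hp.one_lt hN)
  · rw [Nat.mod_eq_of_lt hm, Nat.mod_eq_of_lt hNm]
    omega

theorem lcmUpto_dvd_lcmUpto_mul_choose {m N : ℕ} (hm : m ≤ N) (hN : N ≤ 2 * m) :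
    Nat.lcmUpto N ∣ Nat.lcmUpto m * N.choose m := by
  have hchoose : N.choose m ≠ 0 := (Nat.choose_pos hm).ne'
  rw [← Nat.factorization_prime_le_iff_dvd (Nat.lcmUpto_ne_zero N)
    (mul_ne_zero (Nat.lcmUpto_ne_zero m) hchoose)]
  intro p hp
  rw [Nat.factorization_mul (Nat.lcmUpto_ne_zero m) hchoose, Finsupp.add_apply,
    Nat.factorization_lcmUpto _ hp, Nat.factorization_lcmUpto _ hp]
  rcases le_or_gt (p ^ p.log N) m with hle | hlt
  · exact le_add_right (Nat.le_log_of_pow_le hp.one_lt hle)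
  rcases eq_or_ne N 0 with rfl | hN0
  · simp
  have hlog : p.log N ≤ p.log m + 1 := by
    rw [← Nat.log_mul_base hp.one_lt (by omega)]
    exact Nat.log_mono_right (by nlinarith [hp.two_le])
  have hcarry := one_le_factorization_choose hp hlt (by omega) (Nat.pow_log_le_self p hN0)
  omega

theorem choose_half_le_four_pow (n : ℕ) : n.choose (n / 2) ≤ 4 ^ (n / 2) := by
  rcases Nat.even_or_odd' n with ⟨k, rfl | rfl⟩
  · rw [Nat.mul_div_cancel_left k two_pos]
    exact (Nat.choose_le_two_pow _ _).trans_eq (pow_mul 2 2 k)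
  · rw [show (2 * k + 1) / 2 = k by omega]
    exact Nat.choose_middle_le_pow k

theorem lcmUpto_le_four_pow (n : ℕ) : Nat.lcmUpto n ≤ 4 ^ n := by
  induction n using Nat.strong_induction_on with
  | _ n ih =>
    rcases Nat.lt_or_ge n 2 with hn | hn
    · interval_cases n <;> simp [Nat.lcmUpto]
    calc Nat.lcmUpto n ≤ Nat.lcmUpto (n - n / 2) * n.choose (n - n / 2) :=
          Nat.le_of_dvd (Nat.mul_pos (Nat.lcmUpto_pos _) (Nat.choose_pos (Nat.sub_le _ _)))
            (lcmUpto_dvd_lcmUpto_mul_choose (Nat.sub_le _ _) (by omega))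
      _ ≤ 4 ^ (n - n / 2) * 4 ^ (n / 2) := by
          rw [Nat.choose_symm (Nat.div_le_self n 2)]
          exact Nat.mul_le_mul (ih _ (by omega)) (choose_half_le_four_pow n)
      _ = 4 ^ n := by rw [← pow_add, Nat.sub_add_cancel (Nat.div_le_self n 2)]

/-- A common multiple of the products of at most `l` positive integers with sum at most `T`, hence
a common denominator of the coefficients of degree at most `T` of `log (1 + u) ^ l`. -/
def logDenom (T l : ℕ) : ℕ := ∏ j ∈ Finset.range l, Nat.lcmUpto (T / (j + 1))

theorem logDenom_pos (T l : ℕ) : 0 < logDenom T l :=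
  Finset.prod_pos fun _ _ => Nat.lcmUpto_pos _

theorem logDenom_dvd_logDenom (T : ℕ) {l n : ℕ} (hln : l ≤ n) : logDenom T l ∣ logDenom T n :=
  Finset.prod_dvd_prod_of_subset _ _ _ (Finset.range_subset_range.mpr hln)

-- The smallest of `l` positive integers with sum at most `T` is at most `T / l`.
theorem multiset_prod_dvd_logDenom {T : ℕ} {s : Multiset ℕ} (hpos : ∀ a ∈ s, 0 < a)
    (hsum : s.sum ≤ T) : s.prod ∣ logDenom T s.card := by
  induction hl : s.card generalizing s with
  | zero => simp [Multiset.card_eq_zero.mp hl]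
  | succ l ih =>
    obtain ⟨a, ha, hmin⟩ : ∃ a ∈ s, ∀ b ∈ s, a ≤ b := by
      simpa using Finset.exists_min_image s.toFinset id
        (Multiset.toFinset_nonempty.mpr (Multiset.card_pos.mp (by omega)))
    have hle : a * (l + 1) ≤ T := by
      have hcard := Multiset.card_nsmul_le_sum hmin
      rw [hl, smul_eq_mul, mul_comm] at hcard
      exact hcard.trans hsum
    obtain ⟨s, rfl⟩ := Multiset.exists_cons_of_mem ha
    rw [Multiset.sum_cons] at hsum
    rw [Multiset.prod_cons, logDenom, Finset.prod_range_succ, mul_comm]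
    exact Nat.mul_dvd_mul
      (ih (fun b hb => hpos b (Multiset.mem_cons_of_mem hb)) (by omega) (by simpa using hl))
      (Finset.dvd_lcm (f := id) (Finset.mem_Icc.mpr
        ⟨hpos a ha, (Nat.le_div_iff_mul_le (Nat.succ_pos l)).mpr hle⟩))

theorem log_lcmUpto_le (n : ℕ) : Real.log (Nat.lcmUpto n) ≤ n * Real.log 4 := by
  rw [← Real.log_pow]
  exact Real.log_le_log (by exact_mod_cast Nat.lcmUpto_pos n)
    (by exact_mod_cast lcmUpto_le_four_pow n)

theorem log_logDenom_le (T l : ℕ) :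
    Real.log (logDenom T l) ≤ Real.log 4 * T * (1 + Real.log l) := by
  calc Real.log (logDenom T l)
      = ∑ j ∈ Finset.range l, Real.log (Nat.lcmUpto (T / (j + 1))) := by
        rw [logDenom, Nat.cast_prod, Real.log_prod]
        exact fun j _ => by exact_mod_cast Nat.lcmUpto_ne_zero _
    _ ≤ ∑ j ∈ Finset.range l, Real.log 4 * T * ((j : ℝ) + 1)⁻¹ := by
        refine Finset.sum_le_sum fun j _ => (log_lcmUpto_le _).trans ?_
        have hdiv : ((T / (j + 1) : ℕ) : ℝ) ≤ T / ((j : ℝ) + 1) := by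
          simpa using Nat.cast_div_le (α := ℝ) (m := T) (n := j + 1)
        calc ((T / (j + 1) : ℕ) : ℝ) * Real.log 4 ≤ T / ((j : ℝ) + 1) * Real.log 4 := by gcongr
          _ = Real.log 4 * T * ((j : ℝ) + 1)⁻¹ := by rw [div_eq_mul_inv]; ring
    _ = Real.log 4 * T * (harmonic l : ℚ) := by
        rw [← Finset.mul_sum, harmonic]; push_cast; rfl
    _ ≤ Real.log 4 * T * (1 + Real.log l) := by
        gcongr
        exact harmonic_le_one_add_log l

variable {F : Type*} [Field F] [Algebra ℚ F]

theorem logDenom_mul_coeff_log_pow_mem_range (T l : ℕ) {t : ℕ} (ht : t ≤ T) :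
    (logDenom T l : F) * PowerSeries.coeff t (PowerSeries.log F ^ l) ∈
      (Int.castRingHom F).range := by
  have : CharZero F := algebraRat.charZero F
  rw [PowerSeries.coeff_pow, Finset.mul_sum]
  refine sum_mem fun a ha => ?_
  obtain ⟨hsum, -⟩ := Finset.mem_finsuppAntidiag.mp ha
  by_cases hzero : ∃ i ∈ Finset.range l, a i = 0
  · obtain ⟨i, hi, hai⟩ := hzero
    rw [Finset.prod_eq_zero hi (by simp [hai]), mul_zero]
    exact zero_mem _
  push Not at hzero
  obtain ⟨c, hc⟩ : ∏ i ∈ Finset.range l, a i ∣ logDenom T l := by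
    have hdvd := multiset_prod_dvd_logDenom (T := T) (s := (Finset.range l).val.map a)
      (fun b hb => by
        obtain ⟨i, hi, rfl⟩ := Multiset.mem_map.mp hb
        exact Nat.pos_of_ne_zero (hzero i hi)) (hsum.trans_le ht)
    rwa [Multiset.card_map, Finset.card_val, Finset.card_range] at hdvd
  refine ⟨c * ∏ i ∈ Finset.range l, (-1) ^ (a i + 1), ?_⟩
  have hprod : ∏ i ∈ Finset.range l, (a i : F) ≠ 0 :=
    Finset.prod_ne_zero_iff.mpr fun i hi => Nat.cast_ne_zero.mpr (hzero i hi)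
  have hcoeff : ∏ i ∈ Finset.range l, PowerSeries.coeff (a i) (PowerSeries.log F) =
      (∏ i ∈ Finset.range l, (-1) ^ (a i + 1)) / ∏ i ∈ Finset.range l, (a i : F) := by
    rw [← Finset.prod_div_distrib]
    exact Finset.prod_congr rfl fun i hi => by simp [hzero i hi]
  rw [hcoeff, hc]
  push_cast
  field_simp
  simp

theorem powerSeries_coeff_one_add_X_pow {R : Type*} [CommSemiring R] (k t : ℕ) :
    PowerSeries.coeff t ((1 + PowerSeries.X : R⟦X⟧) ^ k) = k.choose t := by
  rw [← Polynomial.coeff_one_add_X_pow R k t, ← Polynomial.coeff_coe]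
  simp

theorem logDenom_mul_coeff_mem_range {T l n t : ℕ} (k : ℕ) (hl : l ≤ n) (ht : t ≤ T) :
    (logDenom T n : F) *
      PowerSeries.coeff t (PowerSeries.log F ^ l * (1 + PowerSeries.X) ^ k) ∈
        (Int.castRingHom F).range := by
  obtain ⟨c, hc⟩ := logDenom_dvd_logDenom T hl
  rw [PowerSeries.coeff_mul, Finset.mul_sum]
  refine sum_mem fun p hp => ?_
  have hp1 : p.1 ≤ T := by
    have := Finset.HasAntidiagonal.mem_antidiagonal.mp hp
    omega
  have hrw : (logDenom T n : F) * (PowerSeries.coeff p.1 (PowerSeries.log F ^ l) *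
      PowerSeries.coeff p.2 ((1 + PowerSeries.X : F⟦X⟧) ^ k)) =
      c * k.choose p.2 * (logDenom T l * PowerSeries.coeff p.1 (PowerSeries.log F ^ l)) := by
    rw [hc, powerSeries_coeff_one_add_X_pow]
    push_cast
    ring
  rw [hrw]
  exact mul_mem (mul_mem (natCast_mem _ c) (natCast_mem _ _))
    (logDenom_mul_coeff_log_pow_mem_range T l hp1)

end Denominators

-- The factor `f` starts in degree one, and `∑_{m ≥ 1} 2⁻ᵐ ≤ 1`.
theorem norm_coeff_mul_le_two_pow {R : Type*} [SeminormedRing R] {f g : R⟦X⟧} {A : ℝ}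
    (hf0 : PowerSeries.coeff 0 f = 0) (hf : ∀ m, ‖PowerSeries.coeff m f‖ ≤ 1)
    (hg : ∀ m, ‖PowerSeries.coeff m g‖ ≤ A * 2 ^ m) (t : ℕ) :
    ‖PowerSeries.coeff t (f * g)‖ ≤ A * 2 ^ t := by
  have hA : 0 ≤ A := by simpa using (norm_nonneg _).trans (hg 0)
  rw [PowerSeries.coeff_mul, Finset.Nat.sum_antidiagonal_eq_sum_range_succ_mk,
    Finset.sum_range_succ', hf0, zero_mul, add_zero]
  calc ‖∑ m ∈ Finset.range t, PowerSeries.coeff (m + 1) f * PowerSeries.coeff (t - (m + 1)) g‖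
      ≤ ∑ m ∈ Finset.range t, A * 2 ^ (t - 1 - m) := by
        refine norm_sum_le_of_le _ fun m _ => (norm_mul_le _ _).trans ?_
        rw [← one_mul (A * _), show t - 1 - m = t - (m + 1) by omega]
        exact mul_le_mul (hf _) (hg _) (norm_nonneg _) zero_le_one
    _ = A * (2 ^ t - 1) := by
        rw [← Finset.mul_sum, Finset.sum_range_reflect (fun j => (2 : ℝ) ^ j) t,
          geom_sum_eq (by norm_num)]
        norm_num
    _ ≤ A * 2 ^ t := by gcongr; linarith

theorem norm_coeff_log_le_one (m : ℕ) : ‖PowerSeries.coeff m (PowerSeries.log ℂ)‖ ≤ 1 := by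
  rcases Nat.eq_zero_or_pos m with rfl | hm
  · simp
  · simpa [hm.ne'] using inv_le_one_of_one_le₀ (Nat.one_le_cast.mpr hm : (1 : ℝ) ≤ m)

theorem norm_coeff_log_pow_mul_le (l k t : ℕ) :
    ‖PowerSeries.coeff t (PowerSeries.log ℂ ^ l * (1 + PowerSeries.X) ^ k)‖ ≤ 2 ^ k * 2 ^ t := by
  induction l generalizing t with
  | zero =>
    rw [pow_zero, one_mul, powerSeries_coeff_one_add_X_pow, Complex.norm_natCast]
    calc (k.choose t : ℝ) ≤ 2 ^ k := by exact_mod_cast Nat.choose_le_two_pow k t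
      _ ≤ 2 ^ k * 2 ^ t := le_mul_of_one_le_right (by positivity) (one_le_pow₀ one_le_two)
  | succ l ih =>
    rw [pow_succ', mul_assoc]
    exact norm_coeff_mul_le_two_pow (by simp) norm_coeff_log_le_one ih t

/-! ### The zero estimate -/

section Wronskian

variable {R : Type*} [CommRing R]

/-- The operator `∂ + k` on polynomials. It is the effect on `P` of applying `d/dx` to
`P(x) * exp (k * x)`, equivalently of applying `(1 + u) d/du` to
`P(a + log (1 + u)) * (1 + u) ^ k`. -/
noncomputable def shiftOp (k : ℕ) (P : R[X]) : R[X] := derivative P + C (k : R) * P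

theorem natDegree_shiftOp_iterate_le (k j : ℕ) (P : R[X]) :
    ((shiftOp k)^[j] P).natDegree ≤ P.natDegree := by
  induction j with
  | zero => simp
  | succ j ih =>
    rw [Function.iterate_succ_apply']
    exact (natDegree_add_le _ _).trans (max_le
      ((natDegree_derivative_le _).trans ((Nat.sub_le _ _).trans ih))
      ((natDegree_C_mul_le _ _).trans ih))

theorem coeff_natDegree_shiftOp_iterate (k j : ℕ) (P : R[X]) :
    ((shiftOp k)^[j] P).coeff P.natDegree = (k : R) ^ j * P.leadingCoeff := by
  induction j with
  | zero => simp
  | succ j ih =>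
    rw [Function.iterate_succ_apply', shiftOp, coeff_add, coeff_C_mul, ih, coeff_derivative,
      coeff_eq_zero_of_natDegree_lt (Nat.lt_succ_of_le (natDegree_shiftOp_iterate_le k j P))]
    ring

theorem coeff_prod_sum_of_natDegree_le {ι : Type*} (s : Finset ι) (f : ι → R[X]) (d : ι → ℕ)
    (h : ∀ i ∈ s, (f i).natDegree ≤ d i) :
    (∏ i ∈ s, f i).coeff (∑ i ∈ s, d i) = ∏ i ∈ s, (f i).coeff (d i) := by
  classical
  induction s using Finset.induction_on with
  | empty => simp
  | insert a s ha ih =>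
    rw [Finset.forall_mem_insert] at h
    rw [Finset.prod_insert ha, Finset.sum_insert ha, Finset.prod_insert ha,
      coeff_mul_add_eq_of_natDegree_le h.1
        ((natDegree_prod_le _ _).trans (Finset.sum_le_sum h.2)), ih h.2]

/-- The Wronskian matrix of the exponential polynomials `P c (x) * exp (κ c * x)`, with the
exponential factor removed from every column. -/
noncomputable def expWronskian {m : ℕ} (κ : Fin m → ℕ) (P : Fin m → R[X]) :
    Matrix (Fin m) (Fin m) R[X] :=
  Matrix.of fun j c => (shiftOp (κ c))^[j] (P c)

variable {m : ℕ}

theorem coeff_det_expWronskian (κ : Fin m → ℕ) (P : Fin m → R[X]) :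
    (expWronskian κ P).det.coeff (∑ c, (P c).natDegree) =
      (∏ c, (P c).leadingCoeff) * (Matrix.vandermonde fun c => (κ c : R)).det := by
  rw [← Matrix.det_transpose (Matrix.vandermonde _), ← Matrix.det_mul_row, Matrix.det_apply,
    Matrix.det_apply, finsetSum_coeff]
  refine Finset.sum_congr rfl fun σ _ => ?_
  have hdeg (c : Fin m) (_ : c ∈ Finset.univ) :
      (expWronskian κ P (σ c) c).natDegree ≤ (P c).natDegree :=
    natDegree_shiftOp_iterate_le _ _ _
  rw [coeff_smul, coeff_prod_sum_of_natDegree_le _ _ _ hdeg]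
  congr 1
  refine Finset.prod_congr rfl fun c _ => ?_
  rw [expWronskian, Matrix.of_apply, coeff_natDegree_shiftOp_iterate, Matrix.of_apply,
    Matrix.transpose_apply, Matrix.vandermonde_apply, mul_comm]

theorem det_expWronskian_ne_zero [IsDomain R] [CharZero R] {κ : Fin m → ℕ}
    (hκ : Function.Injective κ) {P : Fin m → R[X]} (hP : ∀ c, P c ≠ 0) :
    (expWronskian κ P).det ≠ 0 := by
  intro hdet
  have hcoeff := coeff_det_expWronskian κ P
  rw [hdet, coeff_zero] at hcoeff
  exact mul_ne_zero (Finset.prod_ne_zero_iff.mpr fun c _ => leadingCoeff_ne_zero.mpr (hP c))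
    (Matrix.det_vandermonde_ne_zero_iff.mpr (Nat.cast_injective.comp hκ)) hcoeff.symm

theorem natDegree_det_expWronskian_le {n : ℕ} (κ : Fin m → ℕ) {P : Fin m → R[X]}
    (hP : ∀ c, (P c).natDegree ≤ n) : (expWronskian κ P).det.natDegree ≤ m * n := by
  rw [Matrix.det_apply]
  refine natDegree_sum_le_of_forall_le _ _ fun σ _ => ?_
  calc _ ≤ ∑ c, (expWronskian κ P (σ c) c).natDegree :=
        (natDegree_smul_le _ _).trans (natDegree_prod_le _ _)
    _ ≤ ∑ _c : Fin m, n := Finset.sum_le_sum fun c _ =>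
        (natDegree_shiftOp_iterate_le _ _ _).trans (hP c)
    _ = m * n := by simp

end Wronskian

-- Multiply `A *ᵥ v` by the adjugate of `A`.
theorem dvd_det_of_forall_dvd_mulVec {ι R : Type*} [Fintype ι] [DecidableEq ι] [CommRing R]
    {A : Matrix ι ι R} {v : ι → R} {a : R} (hA : ∀ j, a ∣ A.mulVec v j) {i : ι}
    (hi : IsUnit (v i)) : a ∣ A.det := by
  have hadj : A.adjugate.mulVec (A.mulVec v) i = A.det * v i := by
    rw [Matrix.mulVec_mulVec, Matrix.adjugate_mul, Matrix.smul_mulVec, Matrix.one_mulVec,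
      Pi.smul_apply, smul_eq_mul]
  rw [← hi.dvd_mul_right, ← hadj]
  exact Finset.dvd_sum fun j _ => (hA j).mul_left _

section ZeroEstimate

variable {F : Type*} [Field F] [Algebra ℚ F]

/-- The power series `a + log (1 + u)`. -/
noncomputable def shiftedLog (a : F) : F⟦X⟧ := PowerSeries.C a + PowerSeries.log F

theorem one_add_X_mul_derivative_shiftedLog (a : F) :
    (1 + PowerSeries.X) * PowerSeries.derivative F (shiftedLog a) = 1 := by
  rw [shiftedLog, map_add, PowerSeries.derivative_C, zero_add, PowerSeries.deriv_log, add_mul,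
    one_mul]
  ext n
  rcases n with _ | n
  · simp
  · rw [map_add, PowerSeries.coeff_succ_X_mul]
    simp [PowerSeries.coeff_one, pow_succ]

theorem constantCoeff_aeval_shiftedLog (a : F) (W : F[X]) :
    PowerSeries.constantCoeff (aeval (shiftedLog a) W) = W.eval a := by
  have hid : (PowerSeries.constantCoeff (R := F)).comp (algebraMap F F⟦X⟧) = RingHom.id F := by
    ext
    simp
  rw [aeval_def, hom_eval₂, hid, shiftedLog, eval₂_id]
  simp [PowerSeries.constantCoeff_log]

theorem one_add_X_mul_derivative_aeval_shiftedLog_mul (a : F) (k : ℕ) (Q : F[X]) :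
    (1 + PowerSeries.X) * PowerSeries.derivative F
      (aeval (shiftedLog a) Q * (1 + PowerSeries.X) ^ k) =
      aeval (shiftedLog a) (shiftOp k Q) * (1 + PowerSeries.X) ^ k := by
  have hchain : PowerSeries.derivative F (aeval (shiftedLog a) Q) =
      aeval (shiftedLog a) (derivative Q) * PowerSeries.derivative F (shiftedLog a) := by
    rw [← smul_eq_mul]
    exact Derivation.map_aeval _ Q (shiftedLog a)
  have hpow : (1 + PowerSeries.X) * PowerSeries.derivative F ((1 + PowerSeries.X) ^ k) =
      (k : F⟦X⟧) * (1 + PowerSeries.X) ^ k := by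
    rw [PowerSeries.derivative_pow, map_add, PowerSeries.derivative_X, PowerSeries.derivative_one]
    rcases k with _ | k
    · simp
    · rw [Nat.add_sub_cancel]
      ring
  have hC : aeval (shiftedLog a) (C (k : F)) = (k : F⟦X⟧) := by simp
  rw [Derivation.leibniz, hchain, shiftOp, map_add, map_mul, hC, smul_eq_mul, smul_eq_mul]
  linear_combination aeval (shiftedLog a) Q * hpow + aeval (shiftedLog a) (derivative Q) *
    (1 + PowerSeries.X) ^ k * one_add_X_mul_derivative_shiftedLog a

theorem X_pow_dvd_derivative {R : Type*} [CommSemiring R] {T : ℕ} {f : R⟦X⟧}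
    (h : PowerSeries.X ^ (T + 1) ∣ f) : PowerSeries.X ^ T ∣ PowerSeries.derivative R f := by
  rw [PowerSeries.X_pow_dvd_iff] at h ⊢
  intro m hm
  rw [PowerSeries.coeff_derivative, h (m + 1) (by omega), zero_mul]

theorem X_pow_dvd_sum_shiftOp_iterate {ι : Type*} {s : Finset ι} {T : ℕ} {a : F} {κ : ι → ℕ}
    {P : ι → F[X]}
    (h : PowerSeries.X ^ T ∣ ∑ c ∈ s, aeval (shiftedLog a) (P c) * (1 + PowerSeries.X) ^ κ c)
    {j : ℕ} (hj : j ≤ T) :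
    PowerSeries.X ^ (T - j) ∣
      ∑ c ∈ s, aeval (shiftedLog a) ((shiftOp (κ c))^[j] (P c)) * (1 + PowerSeries.X) ^ κ c := by
  induction j with
  | zero => simpa using h
  | succ j ih =>
    have hprev := ih (by omega)
    rw [show T - j = T - (j + 1) + 1 by omega] at hprev
    have hderiv := (X_pow_dvd_derivative hprev).mul_left (1 + PowerSeries.X)
    simpa only [map_sum, Finset.mul_sum, one_add_X_mul_derivative_aeval_shiftedLog_mul,
      Function.iterate_succ_apply'] using hderiv

theorem X_pow_dvd_aeval_det_expWronskian {m T : ℕ} (hm : 0 < m) (hT : m ≤ T) {a : F}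
    {κ : Fin m → ℕ} {P : Fin m → F[X]}
    (h : PowerSeries.X ^ T ∣ ∑ c, aeval (shiftedLog a) (P c) * (1 + PowerSeries.X) ^ κ c) :
    PowerSeries.X ^ (T - m + 1) ∣ aeval (shiftedLog a) (expWronskian κ P).det := by
  rw [AlgHom.map_det]
  refine dvd_det_of_forall_dvd_mulVec (v := fun c => (1 + PowerSeries.X) ^ κ c) (i := ⟨0, hm⟩)
    (fun j => ?_) (IsUnit.pow _ (by simp [PowerSeries.isUnit_iff_constantCoeff]))
  exact (pow_dvd_pow _ (by omega)).trans (X_pow_dvd_sum_shiftOp_iterate h (j := j) (by omega))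

-- The series `log (1 + u)` has order one, so substituting `a + log (1 + u)` preserves orders of
-- vanishing.
theorem X_sub_C_pow_dvd_of_X_pow_dvd {a : F} {W : F[X]} {r : ℕ}
    (h : PowerSeries.X ^ r ∣ aeval (shiftedLog a) W) : (X - C a) ^ r ∣ W := by
  have : CharZero F := algebraRat.charZero F
  rcases eq_or_ne W 0 with rfl | hW
  · simp
  obtain ⟨V, hV, hdvd⟩ := exists_eq_pow_rootMultiplicity_mul_and_not_dvd W hW a
  set m := rootMultiplicity a W
  suffices r ≤ m by
    rw [hV]
    exact (pow_dvd_pow _ this).mul_right _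
  have hlog : aeval (shiftedLog a) (X - C a) = PowerSeries.log F := by
    rw [map_sub, aeval_X, aeval_C, shiftedLog, PowerSeries.algebraMap_apply]
    simp
  have hunit : IsUnit (aeval (shiftedLog a) V) := by
    rw [PowerSeries.isUnit_iff_constantCoeff, constantCoeff_aeval_shiftedLog, isUnit_iff_ne_zero]
    exact fun hroot => hdvd (dvd_iff_isRoot.mpr hroot)
  rw [hV, map_mul, map_pow, hlog, hunit.dvd_mul_right, PowerSeries.X_pow_dvd_iff] at h
  have horder := PowerSeries.nat_le_order _ _ h
  rw [PowerSeries.order_pow, PowerSeries.order_log, nsmul_one] at horder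
  exact_mod_cast horder

-- The Wronskian determinant has degree at most `m * n` and vanishes to order `T - m + 1` at each of
-- the `S` distinct points `s * β`.
theorem zero_estimate_of_forall_ne_zero {m n S T : ℕ} (hm : 0 < m) (hT : m ≤ T) {β : F}
    (hβ : β ≠ 0) {κ : Fin m → ℕ} (hκ : Function.Injective κ) {P : Fin m → F[X]}
    (hP : ∀ c, P c ≠ 0) (hn : ∀ c, (P c).natDegree ≤ n)
    (h : ∀ s < S, PowerSeries.X ^ T ∣
      ∑ c, aeval (shiftedLog (s * β)) (P c) * (1 + PowerSeries.X) ^ κ c) :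
    S * (T - m + 1) ≤ m * n := by
  have : CharZero F := algebraRat.charZero F
  have hdvd : ∏ s ∈ Finset.range S, (X - C ((s : F) * β)) ^ (T - m + 1) ∣
      (expWronskian κ P).det := by
    refine Finset.prod_dvd_of_coprime (fun s _ s' _ hs => ?_) fun s hs =>
      X_sub_C_pow_dvd_of_X_pow_dvd
        (X_pow_dvd_aeval_det_expWronskian hm hT (h s (Finset.mem_range.mp hs)))
    refine (isCoprime_X_sub_C_of_isUnit_sub ?_).pow
    rw [← sub_mul]
    exact (mul_ne_zero (sub_ne_zero.mpr (Nat.cast_injective.ne hs)) hβ).isUnit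
  have hdeg := natDegree_le_of_dvd hdvd (det_expWronskian_ne_zero hκ hP)
  rw [natDegree_prod _ _ fun s _ => pow_ne_zero _ (X_sub_C_ne_zero _)] at hdeg
  simp only [natDegree_pow, natDegree_X_sub_C, mul_one, Finset.sum_const, Finset.card_range,
    smul_eq_mul] at hdeg
  exact hdeg.trans (natDegree_det_expWronskian_le κ hn)

theorem zero_estimate {K n S T : ℕ} (hKT : K ≤ T) {β : F} (hβ : β ≠ 0) {P : Fin K → F[X]}
    (hP : P ≠ 0) (hn : ∀ k, (P k).natDegree ≤ n)
    (h : ∀ s < S, PowerSeries.X ^ T ∣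
      ∑ k, aeval (shiftedLog (s * β)) (P k) * (1 + PowerSeries.X) ^ (k : ℕ)) :
    S * (T - K + 1) ≤ K * n := by
  classical
  set J : Finset (Fin K) := Finset.univ.filter fun k => P k ≠ 0 with hJ
  obtain ⟨k, hk⟩ := Function.ne_iff.mp hP
  have hJpos : 0 < J.card := Finset.card_pos.mpr ⟨k, by simpa [hJ] using hk⟩
  have hJK : J.card ≤ K := J.card_le_univ.trans_eq (Fintype.card_fin K)
  let e := J.equivFin.symm
  have hsum (g : Fin K → F⟦X⟧) (hg : ∀ k, P k = 0 → g k = 0) :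
      ∑ c, g (e c) = ∑ k, g k := by
    rw [Equiv.sum_comp e (fun k : J => g k), Finset.sum_coe_sort J g]
    exact Finset.sum_filter_of_ne fun k _ => mt (hg k)
  have hbound : S * (T - J.card + 1) ≤ J.card * n :=
    zero_estimate_of_forall_ne_zero hJpos (hJK.trans hKT) hβ (κ := fun c => ((e c : Fin K) : ℕ))
      (fun a b hab => e.injective (Subtype.ext (Fin.ext hab)))
      (fun c => (Finset.mem_filter.mp (e c).2).2) (fun c => hn (e c)) fun s hs => by
        rw [hsum (fun k => aeval (shiftedLog (s * β)) (P k) * (1 + PowerSeries.X) ^ (k : ℕ))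
          fun k hk => by simp [hk]]
        exact h s hs
  calc S * (T - K + 1) ≤ S * (T - J.card + 1) := Nat.mul_le_mul_left _ (by omega)
    _ ≤ J.card * n := hbound
    _ ≤ K * n := Nat.mul_le_mul_right _ hJK

end ZeroEstimate

/-! ### Interpolation determinants -/

theorem exists_det_submatrix_ne_zero {F m n : Type*} [Field F] [Finite m] [Fintype n]
    [DecidableEq n] (A : Matrix m n F) (hA : ∀ v : n → F, A.mulVec v = 0 → v = 0) :
    ∃ f : n → m, (A.submatrix f id).det ≠ 0 := by
  have := Fintype.ofFinite m
  have hrank : A.rank = Fintype.card n := by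
    rw [Matrix.rank, LinearMap.finrank_range_of_inj, Module.finrank_fintype_fun_eq_card]
    exact (injective_iff_map_eq_zero _).mpr fun v hv => hA v hv
  rw [Matrix.rank_eq_finrank_span_row] at hrank
  obtain ⟨κ, a, ha, hspan, hli⟩ := exists_linearIndependent' F A.row
  have : Finite κ := Finite.of_injective a ha
  have := Fintype.ofFinite κ
  have hcard : Fintype.card n = Fintype.card κ := by
    rw [← hrank, ← hspan, finrank_span_eq_card hli]
  let e : n ≃ κ := Fintype.equivOfCardEq hcard
  have hrows : LinearIndependent F (A.submatrix (a ∘ e) id).row := hli.comp e e.injective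
  rw [Matrix.linearIndependent_rows_iff_isUnit, Matrix.isUnit_iff_isUnit_det] at hrows
  exact ⟨a ∘ e, hrows.ne_zero⟩

section InterpolationMatrix

variable {F : Type*} [Field F] [Algebra ℚ F]

/-- The coefficient of `u ^ t` in `(s * y + log (1 + u)) ^ i * (1 + u) ^ k`. It is the Taylor
coefficient, in the local coordinate `u = exp (z - s * y) - 1` at `s * y`, of `z ^ i * exp (k * z)`,
up to the factor `exp (k * s * y)`. -/
noncomputable def interpEntry (y : F) (s t i k : ℕ) : F :=
  PowerSeries.coeff t (shiftedLog (s * y) ^ i * (1 + PowerSeries.X) ^ k)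

theorem interpEntry_eq_sum (y : F) (s t i k : ℕ) : interpEntry y s t i k =
    ∑ l ∈ Finset.range (i + 1), ((s : F) * y) ^ (i - l) * (i.choose l : F) *
      PowerSeries.coeff t (PowerSeries.log F ^ l * (1 + PowerSeries.X) ^ k) := by
  rw [interpEntry, shiftedLog, add_comm, add_pow, Finset.sum_mul, map_sum]
  refine Finset.sum_congr rfl fun l _ => ?_
  rw [← PowerSeries.coeff_C_mul]
  congr 1
  simp only [map_mul, map_pow, map_natCast]
  ring

theorem exists_intPolynomial_interpEntry {T n s t i : ℕ} (k : ℕ) (ht : t ≤ T) (hi : i < n) :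
    ∃ A : ℤ[X], A.natDegree ≤ i ∧ ∀ y : F, aeval y A = logDenom T n * interpEntry y s t i k := by
  have hint (l : ℕ) : ∃ z : ℤ, l ∈ Finset.range (i + 1) → (z : F) = logDenom T n *
      PowerSeries.coeff t (PowerSeries.log F ^ l * (1 + PowerSeries.X) ^ k) := by
    by_cases hl : l ∈ Finset.range (i + 1)
    · obtain ⟨z, hz⟩ := logDenom_mul_coeff_mem_range (F := F) (T := T) (n := n) (l := l) k
        (by grind) ht
      exact ⟨z, fun _ => hz⟩
    · exact ⟨0, fun h => absurd h hl⟩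
  choose z hz using hint
  refine ⟨∑ l ∈ Finset.range (i + 1), C ((s : ℤ) ^ (i - l) * i.choose l * z l) * X ^ (i - l),
    natDegree_sum_le_of_forall_le _ _ fun l _ =>
      (natDegree_C_mul_X_pow_le _ _).trans (Nat.sub_le _ _), fun y => ?_⟩
  rw [interpEntry_eq_sum, map_sum, Finset.mul_sum]
  refine Finset.sum_congr rfl fun l hl => ?_
  rw [map_mul, aeval_C, map_pow, aeval_X, algebraMap_int_eq, eq_intCast]
  push_cast
  rw [hz l hl]
  ring

/-- The matrix of the linear map sending a polynomial in `z` and `exp z`, of degree less than `n` in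
`z` and less than `K` in `exp z`, to its Taylor coefficients of order less than `T` at the points
`s * y`, `s < S` (in the coordinates of `interpEntry`). -/
noncomputable def interpMatrix (S T n K : ℕ) (y : F) :
    Matrix (Fin S × Fin T) (Fin n × Fin K) F :=
  Matrix.of fun r c => interpEntry y r.1 r.2 c.1 c.2

/-- The maximal minor of the interpolation matrix with rows given by `f`. -/
noncomputable def interpDet {S T n K : ℕ} (f : Fin n × Fin K → Fin S × Fin T) (y : F) : F :=
  ((interpMatrix S T n K y).submatrix f id).det

theorem coeff_sum_aeval_shiftedLog {n K : ℕ} (y : F) (s t : ℕ) (v : Fin n × Fin K → F) :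
    PowerSeries.coeff t (∑ k : Fin K, aeval (shiftedLog (s * y))
        (∑ i : Fin n, C (v (i, k)) * X ^ (i : ℕ)) * (1 + PowerSeries.X) ^ (k : ℕ)) =
      ∑ c : Fin n × Fin K, interpEntry y s t c.1 c.2 * v c := by
  rw [map_sum, Fintype.sum_prod_type_right]
  refine Finset.sum_congr rfl fun k _ => ?_
  rw [map_sum, Finset.sum_mul, map_sum]
  refine Finset.sum_congr rfl fun i _ => ?_
  rw [map_mul (aeval _), aeval_C, map_pow, aeval_X, PowerSeries.algebraMap_apply, mul_assoc,
    Algebra.algebraMap_self_apply, PowerSeries.coeff_C_mul, mul_comm, interpEntry]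

theorem exists_interpDet_ne_zero {S T n K : ℕ} (hKT : K ≤ T) {β : F} (hβ : β ≠ 0)
    (hS : K * (n - 1) < S * (T - K + 1)) :
    ∃ f : Fin n × Fin K → Fin S × Fin T, interpDet f β ≠ 0 := by
  refine exists_det_submatrix_ne_zero _ fun v hv => ?_
  have hP : (fun k : Fin K => ∑ i : Fin n, C (v (i, k)) * X ^ (i : ℕ)) = 0 := by
    by_contra hP
    refine hS.not_ge (zero_estimate hKT hβ hP (fun k => natDegree_sum_le_of_forall_le _ _
      fun i _ => (natDegree_C_mul_X_pow_le _ _).trans (by omega)) fun s hs => ?_)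
    refine PowerSeries.X_pow_dvd_iff.mpr fun t ht => ?_
    rw [coeff_sum_aeval_shiftedLog]
    exact congrFun hv (⟨s, hs⟩, ⟨t, ht⟩)
  ext ⟨i, k⟩
  have hcoeff := congrArg (fun p => p.coeff (i : ℕ)) (congrFun hP k)
  simpa [finsetSum_coeff, coeff_X_pow, Fin.val_inj] using hcoeff

theorem sum_fin_prod_fst (n K : ℕ) : ∑ c : Fin n × Fin K, (c.1 : ℕ) = K * n.choose 2 := by
  rw [Fintype.sum_prod_type]
  simp [← Finset.mul_sum, Fin.sum_univ_eq_sum_range (fun i => i) n, Finset.sum_range_id,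
    Nat.choose_two_right]

theorem sum_fin_prod_snd (n K : ℕ) : ∑ c : Fin n × Fin K, (c.2 : ℕ) = n * K.choose 2 := by
  rw [← sum_fin_prod_fst K n, ← Equiv.sum_comp (Equiv.prodComm _ _)]
  rfl

theorem exists_intPolynomial_interpDet {S T n K : ℕ} (f : Fin n × Fin K → Fin S × Fin T) :
    ∃ G : ℤ[X], G.natDegree ≤ K * n.choose 2 ∧
      ∀ y : F, aeval y G = (logDenom T n : F) ^ (n * K) * interpDet f y := by
  choose A hdeg hA using fun r c : Fin n × Fin K =>
    exists_intPolynomial_interpEntry (F := F) (T := T) (s := (f r).1) (c.2 : ℕ) (f r).2.2.le c.1.2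
  refine ⟨(Matrix.of A).det, ?_, fun y => ?_⟩
  · rw [Matrix.det_apply]
    refine natDegree_sum_le_of_forall_le _ _ fun σ _ => ?_
    calc _ ≤ ∑ c, (Matrix.of A (σ c) c).natDegree :=
          (natDegree_smul_le _ _).trans (natDegree_prod_le _ _)
      _ ≤ ∑ c : Fin n × Fin K, (c.1 : ℕ) := Finset.sum_le_sum fun c _ => hdeg _ _
      _ = K * n.choose 2 := sum_fin_prod_fst n K
  · have hcard : n * K = Fintype.card (Fin n × Fin K) := by simp
    rw [AlgHom.map_det, interpDet, hcard, ← Matrix.det_smul]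
    congr 1
    ext r c
    simp [hA, interpMatrix]

end InterpolationMatrix

theorem norm_det_le_of_norm_le_mul {𝕜 ι : Type*} [NormedField 𝕜] [Fintype ι] [DecidableEq ι]
    {A : Matrix ι ι 𝕜} {r c : ι → ℝ} (h : ∀ μ l, ‖A μ l‖ ≤ r μ * c l) :
    ‖A.det‖ ≤ (Fintype.card ι).factorial * ((∏ μ, r μ) * ∏ l, c l) := by
  have hterm (σ : Equiv.Perm ι) :
      ‖Equiv.Perm.sign σ • ∏ i, A (σ i) i‖ ≤ (∏ μ, r μ) * ∏ l, c l := by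
    calc ‖Equiv.Perm.sign σ • ∏ i, A (σ i) i‖ = ∏ i, ‖A (σ i) i‖ := by
          rw [← norm_prod]
          rcases Int.units_eq_one_or (Equiv.Perm.sign σ) with hσ | hσ <;> simp [hσ]
      _ ≤ ∏ i, r (σ i) * c i := Finset.prod_le_prod (fun _ _ => norm_nonneg _) fun i _ => h _ _
      _ = (∏ μ, r μ) * ∏ l, c l := by rw [Finset.prod_mul_distrib, Equiv.prod_comp σ r]
  rw [Matrix.det_apply]
  refine (norm_sum_le_of_le _ fun σ _ => hterm σ).trans_eq ?_
  rw [Finset.sum_const, nsmul_eq_mul, Finset.card_univ, Fintype.card_perm]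

theorem norm_interpEntry_le (y : ℂ) (s t i k : ℕ) :
    ‖interpEntry y s t i k‖ ≤ 2 ^ k * 2 ^ t * (s * ‖y‖ + 1) ^ i := by
  rw [interpEntry_eq_sum, add_comm ((s : ℝ) * ‖y‖), add_pow _ _ i, Finset.mul_sum]
  refine norm_sum_le_of_le _ fun l _ => ?_
  rw [norm_mul, norm_mul, norm_pow, norm_mul, Complex.norm_natCast, Complex.norm_natCast, one_pow,
    one_mul, mul_comm]
  exact mul_le_mul_of_nonneg_right (norm_coeff_log_pow_mul_le l k t) (by positivity)

/-- The constant `B` in the bound `‖interpDet f y‖ ≤ B * max 1 ‖y‖ ^ (K * n.choose 2)`. -/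
noncomputable def interpDetBound (S T n K : ℕ) : ℝ :=
  (n * K).factorial * ((2 ^ T) ^ (n * K) * (2 ^ (n * K.choose 2) * S ^ (K * n.choose 2)))

theorem norm_interpDet_le_max_pow {S T n K : ℕ} (f : Fin n × Fin K → Fin S × Fin T) (y : ℂ) :
    ‖interpDet f y‖ ≤ interpDetBound S T n K * max 1 ‖y‖ ^ (K * n.choose 2) := by
  have hentry (r c : Fin n × Fin K) :
      ‖(interpMatrix S T n K y).submatrix f id r c‖ ≤
        2 ^ T * (2 ^ (c.2 : ℕ) * (S * max 1 ‖y‖) ^ (c.1 : ℕ)) := by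
    have hnode : ((f r).1 : ℝ) * ‖y‖ + 1 ≤ S * max 1 ‖y‖ := by
      have hs : ((f r).1 : ℝ) + 1 ≤ S := by exact_mod_cast (f r).1.2
      calc ((f r).1 : ℝ) * ‖y‖ + 1 ≤ (f r).1 * max 1 ‖y‖ + max 1 ‖y‖ := by
            gcongr
            · exact le_max_right _ _
            · exact le_max_left _ _
        _ = ((f r).1 + 1) * max 1 ‖y‖ := by ring
        _ ≤ S * max 1 ‖y‖ := by gcongr
    calc ‖interpEntry y (f r).1 (f r).2 c.1 c.2‖
        ≤ 2 ^ (c.2 : ℕ) * 2 ^ ((f r).2 : ℕ) * ((f r).1 * ‖y‖ + 1) ^ (c.1 : ℕ) :=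
          norm_interpEntry_le _ _ _ _ _
      _ ≤ 2 ^ (c.2 : ℕ) * 2 ^ T * (S * max 1 ‖y‖) ^ (c.1 : ℕ) := by
          gcongr
          · exact one_le_two
          · exact (f r).2.2.le
      _ = _ := by ring
  refine (norm_det_le_of_norm_le_mul hentry).trans_eq ?_
  simp only [Finset.prod_mul_distrib, Finset.prod_pow_eq_pow_sum, Finset.sum_const, smul_eq_mul,
    sum_fin_prod_fst, sum_fin_prod_snd, Finset.card_univ, Fintype.card_prod, Fintype.card_fin]
  rw [interpDetBound]
  ring

/-! ### The Liouville inequality -/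

local notation "M(" Q ")" => Polynomial.mapMahlerMeasure Q (Int.castRingHom ℂ)

theorem aeval_ne_zero_of_irreducible {F : Type*} [Field F] [Algebra ℚ F] {Q G : ℤ[X]}
    (hQ : Irreducible Q) (hdeg : Q.natDegree ≠ 0) {β b : F} (hβ : aeval β Q = 0)
    (hb : aeval b Q = 0) (hG : aeval β G ≠ 0) : aeval b G ≠ 0 := by
  have hirr : Irreducible (Q.map (algebraMap ℤ ℚ)) :=
    ((hQ.isPrimitive hdeg).irreducible_iff_irreducible_map_fraction_map (K := ℚ)).mp hQ
  obtain ⟨u, v, huv⟩ : IsCoprime (Q.map (algebraMap ℤ ℚ)) (G.map (algebraMap ℤ ℚ)) := by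
    rw [hirr.coprime_iff_not_dvd]
    rintro ⟨R, hR⟩
    refine hG ?_
    rw [← aeval_map_algebraMap ℚ, hR, map_mul, aeval_map_algebraMap, hβ, zero_mul]
  intro hbG
  have hone := congrArg (aeval b) huv
  rw [map_add, map_mul, map_mul, aeval_map_algebraMap, aeval_map_algebraMap, hb, hbG, mul_zero,
    mul_zero, add_zero, map_one] at hone
  exact zero_ne_one hone

theorem resultant_eq_leadingCoeff_pow_mul_prod_aeval_roots {Q G : ℤ[X]} {N : ℕ}
    (hN : G.natDegree ≤ N) :
    ((Q.resultant G Q.natDegree N : ℤ) : ℂ) =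
      (Q.leadingCoeff : ℂ) ^ N * ((Q.aroots ℂ).map fun x => aeval x G).prod := by
  have hinj : Function.Injective (algebraMap ℤ ℂ) := Int.cast_injective
  have hmap := resultant_eq_prod_eval (Q.map (algebraMap ℤ ℂ)) (G.map (algebraMap ℤ ℂ)) N
    (natDegree_map_le.trans hN) (IsAlgClosed.splits _)
  rw [natDegree_map_eq_of_injective hinj, resultant_map_map, leadingCoeff_map_of_injective hinj]
    at hmap
  simp only [eval_map_algebraMap] at hmap
  exact hmap

theorem norm_prod_map {𝕜 ι : Type*} [NormedField 𝕜] (s : Multiset ι) (f : ι → 𝕜) :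
    ‖(s.map f).prod‖ = (s.map fun x => ‖f x‖).prod :=
  (map_multiset_prod (normHom : 𝕜 →*₀ ℝ) _).trans (by rw [Multiset.map_map]; rfl)

theorem norm_prod_map_le_pow_card_mul {𝕜 ι : Type*} [NormedField 𝕜] {s : Multiset ι} {f : ι → 𝕜}
    {g : ι → ℝ} {A : ℝ} {N : ℕ} (h : ∀ x ∈ s, ‖f x‖ ≤ A * g x ^ N) :
    ‖(s.map f).prod‖ ≤ A ^ s.card * (s.map g).prod ^ N := by
  calc ‖(s.map f).prod‖ = (s.map fun x => ‖f x‖).prod := norm_prod_map s f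
    _ ≤ (s.map fun x => A * g x ^ N).prod :=
        Multiset.prod_map_le_prod_map₀ _ _ (fun _ _ => norm_nonneg _) h
    _ = A ^ s.card * (s.map g).prod ^ N := by
        rw [Multiset.prod_map_mul, Multiset.map_const', Multiset.prod_replicate,
          Multiset.prod_map_pow]

-- Up to a power of the leading coefficient, the product of the values of `G` at the roots of `Q` is
-- a nonzero integer, namely a resultant.
theorem one_le_norm_aeval_mul {Q G : ℤ[X]} (hQ : Irreducible Q) (hdeg : Q.natDegree ≠ 0) {β : ℂ}
    (hβ : aeval β Q = 0) (hG : aeval β G ≠ 0) {N : ℕ} (hN : G.natDegree ≤ N) {A : ℝ}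
    (hA : ∀ y : ℂ, ‖aeval y G‖ ≤ A * max 1 ‖y‖ ^ N) :
    1 ≤ ‖aeval β G‖ * A ^ (Q.natDegree - 1) * M(Q) ^ N := by
  have hinj : Function.Injective (algebraMap ℤ ℂ) := Int.cast_injective
  have hA0 : 0 ≤ A := by simpa using (norm_nonneg _).trans (hA 0)
  have hroot {b : ℂ} : b ∈ Q.aroots ℂ ↔ aeval b Q = 0 :=
    mem_aroots.trans (and_iff_right hQ.ne_zero)
  have hcard : (Q.aroots ℂ).card = Q.natDegree := by
    rw [← natDegree_map_eq_of_injective hinj]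
    exact (IsAlgClosed.splits (Q.map (algebraMap ℤ ℂ))).natDegree_eq_card_roots.symm
  have hres := resultant_eq_leadingCoeff_pow_mul_prod_aeval_roots (Q := Q) hN
  have hres0 : Q.resultant G Q.natDegree N ≠ 0 := by
    rw [← Int.cast_ne_zero (α := ℂ), hres]
    refine mul_ne_zero (pow_ne_zero _ (by simpa using hQ.ne_zero)) (Multiset.prod_ne_zero ?_)
    rw [Multiset.mem_map]
    rintro ⟨b, hb, hbG⟩
    exact aeval_ne_zero_of_irreducible hQ hdeg hβ (hroot.mp hb) hG hbG
  obtain ⟨r, hr⟩ := Multiset.exists_cons_of_mem (hroot.mpr hβ)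
  rw [hr, Multiset.card_cons] at hcard
  have hM : M(Q) = ‖(Q.leadingCoeff : ℂ)‖ * (max 1 ‖β‖ * (r.map fun b => max 1 ‖b‖).prod) := by
    rw [← Multiset.prod_cons, ← Multiset.map_cons (fun b : ℂ => max 1 ‖b‖), ← hr]
    rw [mapMahlerMeasure_eq, mahlerMeasure_eq_leadingCoeff_mul_prod_roots,
      leadingCoeff_map_of_injective Int.cast_injective]
    rfl
  have hr0 : 0 ≤ (r.map fun b => max 1 ‖b‖).prod := by
    refine Multiset.prod_nonneg fun x hx => ?_
    obtain ⟨b, -, rfl⟩ := Multiset.mem_map.mp hx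
    positivity
  calc (1 : ℝ) ≤ ‖((Q.resultant G Q.natDegree N : ℤ) : ℂ)‖ := by
        rw [Complex.norm_intCast]
        exact_mod_cast Int.one_le_abs hres0
    _ = ‖(Q.leadingCoeff : ℂ)‖ ^ N * (‖aeval β G‖ * ‖(r.map fun b => aeval b G).prod‖) := by
        rw [hres, hr, Multiset.map_cons, Multiset.prod_cons, norm_mul, norm_pow, norm_mul]
    _ ≤ ‖(Q.leadingCoeff : ℂ)‖ ^ N * (‖aeval β G‖ *
          (A ^ r.card * (r.map fun b => max 1 ‖b‖).prod ^ N)) := by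
        gcongr
        exact norm_prod_map_le_pow_card_mul fun b _ => hA b
    _ ≤ ‖(Q.leadingCoeff : ℂ)‖ ^ N * (‖aeval β G‖ *
          (A ^ r.card * (r.map fun b => max 1 ‖b‖).prod ^ N)) * max 1 ‖β‖ ^ N :=
        le_mul_of_one_le_right (by positivity) (one_le_pow₀ (le_max_left _ _))
    _ = ‖aeval β G‖ * A ^ (Q.natDegree - 1) * M(Q) ^ N := by
        rw [hM, show Q.natDegree - 1 = r.card by omega]
        ring

/-! ### Determinants of rapidly converging series -/

theorem choose_two_card_le_sum {ι : Type*} [Fintype ι] {v : ι → ℕ}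
    (hv : ∀ μ ν, v μ = v ν → v μ < Fintype.card ι → μ = ν) :
    (Fintype.card ι).choose 2 ≤ ∑ μ, v μ := by
  classical
  set M := Fintype.card ι
  have hcount (m : ℕ) (hm : m < M) :
      M - 1 - m ≤ (Finset.univ.filter fun μ => m < v μ).card := by
    have hsmall : (Finset.univ.filter fun μ => ¬ m < v μ).card ≤ m + 1 := by
      rw [← Finset.card_range (m + 1)]
      refine Finset.card_le_card_of_injOn v (fun μ hμ => ?_) fun μ hμ ν _ h => ?_
      · have : ¬ m < v μ := by simpa using hμ
        exact Finset.mem_coe.mpr (Finset.mem_range.mpr (by omega))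
      · have : ¬ m < v μ := by simpa using hμ
        exact hv μ ν h (by omega)
    have htotal := Finset.card_filter_add_card_filter_not (s := (Finset.univ : Finset ι))
      fun μ => m < v μ
    rw [Finset.card_univ] at htotal
    omega
  calc M.choose 2 = ∑ m ∈ Finset.range M, (M - 1 - m) := by
        rw [Finset.sum_range_reflect (fun m => m), Finset.sum_range_id, Nat.choose_two_right]
    _ ≤ ∑ m ∈ Finset.range M, (Finset.univ.filter fun μ => m < v μ).card :=
        Finset.sum_le_sum fun m hm => hcount m (Finset.mem_range.mp hm)
    _ = ∑ μ, ((Finset.range M).filter fun m => m < v μ).card := by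
        simp only [Finset.card_filter]
        exact Finset.sum_comm
    _ ≤ ∑ μ, v μ := Finset.sum_le_sum fun μ _ =>
        (Finset.card_le_card fun m hm => Finset.mem_range.mpr (Finset.mem_filter.mp hm).2).trans_eq
          (Finset.card_range _)

theorem choose_two_card_le_sum_weight_of_injective {ι : Type*} [Fintype ι] {φ : ι → ℕ × ℕ}
    (hφ : Function.Injective φ) :
    (Fintype.card ι).choose 2 ≤ ∑ μ, ((φ μ).1 + (φ μ).2 * Fintype.card ι) := by
  refine choose_two_card_le_sum fun μ ν heq hlt => hφ ?_
  have hsnd {a b N : ℕ} (h : a + b * N < N) : b = 0 := by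
    by_contra hb
    have := Nat.mul_le_mul_right N (Nat.one_le_iff_ne_zero.mpr hb)
    omega
  have hμ := hsnd hlt
  have hν := hsnd (heq ▸ hlt)
  rw [hμ, hν] at heq
  exact Prod.ext (by simpa using heq) (hμ.trans hν.symm)

theorem det_sum_mul {R ι α : Type*} [CommRing R] [Fintype ι] [DecidableEq ι]
    (x : ι → α → R) (c : α → ι → R) (F : Finset α) :
    (Matrix.of fun μ l => ∑ p ∈ F, x μ p * c p l).det =
      ∑ φ ∈ Fintype.piFinset fun _ : ι => F,
        (∏ μ, x μ (φ μ)) * (Matrix.of fun μ l => c (φ μ) l).det := by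
  classical
  have hrow : (Matrix.of fun μ l => ∑ p ∈ F, x μ p * c p l) =
      Matrix.of fun μ => ∑ p ∈ F, x μ p • c p := by
    ext μ l
    simp [Finset.sum_apply]
  rw [hrow]
  refine ((Matrix.detRowAlternating (n := ι) (R := R)).toMultilinearMap.map_sum_finset
    (fun μ p => x μ p • c p) fun _ => F).trans (Finset.sum_congr rfl fun φ _ => ?_)
  rw [MultilinearMap.map_smul_univ, smul_eq_mul]
  rfl

-- A minor whose rows are picked with a repetition vanishes; any other one has total weight at
-- least `W`.
theorem norm_det_sum_mul_le {ι α : Type*} [Fintype ι] [DecidableEq ι]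
    {x : ι → α → ℂ} {c : α → ι → ℂ} {F : Finset α} {w : α → ℕ} {W : ℕ} {r : α → ℝ} {V : ℝ}
    {B : ι → ℝ} (hr : ∀ p, 0 ≤ r p) (hV : 0 ≤ V)
    (hc : ∀ φ : ι → α, ‖(Matrix.of fun μ l => c (φ μ) l).det‖ ≤ V * ∏ μ, r (φ μ))
    (hB : ∀ μ, ∑ p ∈ F, ‖x μ p‖ * r p * Real.exp (w p) ≤ B μ)
    (hW : ∀ φ : ι → α, Function.Injective φ → W ≤ ∑ μ, w (φ μ)) :
    ‖(Matrix.of fun μ l => ∑ p ∈ F, x μ p * c p l).det‖ ≤ V * Real.exp (-W) * ∏ μ, B μ := by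
  have hnonneg (μ : ι) (p : α) : 0 ≤ ‖x μ p‖ * r p * Real.exp (w p) :=
    mul_nonneg (mul_nonneg (norm_nonneg _) (hr _)) (Real.exp_nonneg _)
  have hterm (φ : ι → α) : ‖(∏ μ, x μ (φ μ)) * (Matrix.of fun μ l => c (φ μ) l).det‖ ≤
      V * Real.exp (-W) * ∏ μ, (‖x μ (φ μ)‖ * r (φ μ) * Real.exp (w (φ μ))) := by
    by_cases hφ : Function.Injective φ
    · have hweight : 1 ≤ Real.exp (-W) * ∏ μ, Real.exp (w (φ μ)) := by
        rw [← Real.exp_sum, ← Real.exp_add, Real.one_le_exp_iff, neg_add_eq_sub, sub_nonneg]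
        exact_mod_cast hW φ hφ
      have hprod : 0 ≤ ∏ μ, r (φ μ) := Finset.prod_nonneg fun μ _ => hr _
      rw [norm_mul, norm_prod, Finset.prod_mul_distrib, Finset.prod_mul_distrib]
      calc _ ≤ (∏ μ, ‖x μ (φ μ)‖) * (V * ∏ μ, r (φ μ)) := by gcongr; exact hc φ
        _ ≤ (∏ μ, ‖x μ (φ μ)‖) * (V * ∏ μ, r (φ μ)) *
            (Real.exp (-W) * ∏ μ, Real.exp (w (φ μ))) :=
            le_mul_of_one_le_right (by positivity) hweight
        _ = _ := by ring
    · obtain ⟨a, b, hab, hne⟩ := Function.not_injective_iff.mp hφ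
      rw [Matrix.det_zero_of_row_eq hne (by ext l; simp [hab]), mul_zero, norm_zero]
      exact mul_nonneg (by positivity) (Finset.prod_nonneg fun μ _ => hnonneg _ _)
  rw [det_sum_mul]
  refine (norm_sum_le_of_le _ fun φ _ => hterm φ).trans ?_
  rw [← Finset.mul_sum, ← Finset.prod_univ_sum (fun _ => F)
    fun μ p => ‖x μ p‖ * r p * Real.exp (w p)]
  refine mul_le_mul_of_nonneg_left ?_ (by positivity)
  exact Finset.prod_le_prod (fun μ _ => Finset.sum_nonneg fun p _ => hnonneg _ _) fun μ _ => hB μ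

/-! ### Exponential expansion of the interpolation matrix -/

theorem coeff_shiftedLog_pow_succ {F : Type*} [Field F] [Algebra ℚ F] (a : F) (j t : ℕ) :
    ((t : F) + 1) * PowerSeries.coeff (t + 1) (shiftedLog a ^ (j + 1)) +
      t * PowerSeries.coeff t (shiftedLog a ^ (j + 1)) =
      ((j : F) + 1) * PowerSeries.coeff t (shiftedLog a ^ j) := by
  have hode : (1 + PowerSeries.X) * PowerSeries.derivative F (shiftedLog a ^ (j + 1)) =
      PowerSeries.C ((j : F) + 1) * shiftedLog a ^ j := by
    rw [PowerSeries.derivative_pow, Nat.add_sub_cancel]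
    simp only [map_add, map_natCast, map_one, Nat.cast_add, Nat.cast_one]
    linear_combination ((j : F⟦X⟧) + 1) * shiftedLog a ^ j * one_add_X_mul_derivative_shiftedLog a
  have hcoeff := congrArg (PowerSeries.coeff t) hode
  rw [PowerSeries.coeff_C_mul, add_mul, one_mul, map_add, PowerSeries.coeff_derivative] at hcoeff
  rw [← hcoeff]
  rcases t with _ | t
  · simp
  · rw [PowerSeries.coeff_succ_X_mul, PowerSeries.coeff_derivative]
    push_cast
    ring

theorem hasSum_pow_div_factorial_mul_pow (a b : ℂ) :
    HasSum (fun j : ℕ => a ^ j / j.factorial * b ^ j) (Complex.exp (a * b)) := by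
  rw [Complex.exp_eq_exp_ℂ]
  refine (NormedSpace.expSeries_div_hasSum_exp (a * b)).congr_fun fun j => ?_
  rw [mul_pow, div_mul_eq_mul_div]

theorem cast_choose_succ_mul {R : Type*} [CommRing R] (k t : ℕ) :
    (k.choose (t + 1) : R) * (t + 1) = k.choose t * ((k : R) - t) := by
  rcases le_or_gt t k with h | h
  · rw [← Nat.cast_sub h]
    exact_mod_cast congrArg (Nat.cast (R := R)) (Nat.choose_succ_right_eq k t)
  · simp [Nat.choose_eq_zero_of_lt h, Nat.choose_eq_zero_of_lt (h.trans t.lt_succ_self)]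

-- The coefficient of `u ^ t` in `exp (k * (a + log (1 + u))) = exp (k * a) * (1 + u) ^ k`. Both
-- sides satisfy the same recursion in `t`, coming from `(1 + u) * y' = k * y`.
theorem hasSum_coeff_shiftedLog_pow (a : ℂ) (k t : ℕ) :
    HasSum (fun j : ℕ => (k : ℂ) ^ j / j.factorial * PowerSeries.coeff t (shiftedLog a ^ j))
      (Complex.exp (k * a) * k.choose t) := by
  induction t with
  | zero =>
    have hconst (j : ℕ) : PowerSeries.coeff 0 (shiftedLog a ^ j) = a ^ j := by
      rw [PowerSeries.coeff_zero_eq_constantCoeff, map_pow, shiftedLog]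
      simp [PowerSeries.constantCoeff_log]
    simpa only [hconst, Nat.choose_zero_right, Nat.cast_one, mul_one] using
      hasSum_pow_div_factorial_mul_pow (k : ℂ) a
  | succ t ih =>
    set h : ℕ → ℂ := fun j => (k : ℂ) ^ j / j.factorial * PowerSeries.coeff t (shiftedLog a ^ j)
    have hshift : HasSum (fun j => if j = 0 then 0 else h (j - 1))
        (Complex.exp (k * a) * k.choose t) := by
      rw [← hasSum_nat_add_iff' 1]
      simpa using ih
    have ht : (t : ℂ) + 1 ≠ 0 := t.cast_add_one_ne_zero
    have hvalue : Complex.exp (k * a) * k.choose (t + 1) = ((t : ℂ) + 1)⁻¹ *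
        (k * (Complex.exp (k * a) * k.choose t) - t * (Complex.exp (k * a) * k.choose t)) := by
      rw [eq_inv_mul_iff_mul_eq₀ ht]
      linear_combination Complex.exp (k * a) * cast_choose_succ_mul (R := ℂ) k t
    rw [hvalue]
    refine (((hshift.mul_left _).sub (ih.mul_left _)).mul_left _).congr_fun fun j => ?_
    rcases j with _ | j
    · rcases t with _ | t <;> simp [h, PowerSeries.coeff_one]
    · simp only [h, Nat.succ_ne_zero, if_false, Nat.add_sub_cancel, Nat.factorial_succ,
        Nat.cast_mul, Nat.cast_add, Nat.cast_one]
      have hfact : (j.factorial : ℂ) ≠ 0 := Nat.cast_ne_zero.mpr j.factorial_ne_zero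
      have hj : (j : ℂ) + 1 ≠ 0 := j.cast_add_one_ne_zero
      rw [eq_inv_mul_iff_mul_eq₀ ht]
      field_simp
      linear_combination (k : ℂ) ^ (j + 1) * coeff_shiftedLog_pow_succ a j t

theorem hasSum_interpEntry (y : ℂ) (s t i k : ℕ) :
    HasSum (fun j : ℕ => (k : ℂ) ^ j / j.factorial * interpEntry y s t (i + j) 0)
      (Complex.exp (k * (s * y)) * interpEntry y s t i k) := by
  have hsum := hasSum_sum fun p (_ : p ∈ Finset.HasAntidiagonal.antidiagonal t) =>
    (hasSum_coeff_shiftedLog_pow (s * y) k p.2).mul_left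
      (PowerSeries.coeff p.1 (shiftedLog (s * y) ^ i))
  have hvalue : Complex.exp (k * (s * y)) * interpEntry y s t i k =
      ∑ p ∈ Finset.HasAntidiagonal.antidiagonal t, PowerSeries.coeff p.1 (shiftedLog (s * y) ^ i) *
        (Complex.exp (k * (s * y)) * k.choose p.2) := by
    rw [interpEntry, PowerSeries.coeff_mul, Finset.mul_sum]
    refine Finset.sum_congr rfl fun p _ => ?_
    rw [powerSeries_coeff_one_add_X_pow]
    ring
  rw [hvalue]
  refine hsum.congr_fun fun j => ?_
  rw [interpEntry, pow_zero, mul_one, pow_add, PowerSeries.coeff_mul, Finset.mul_sum]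
  exact Finset.sum_congr rfl fun p _ => by ring

theorem hasSum_mul_prod {f g : ℕ → ℂ} {a b : ℂ} (hf : HasSum f a) (hg : HasSum g b) :
    HasSum (fun p : ℕ × ℕ => f p.1 * g p.2) (a * b) :=
  hf.mul hg (summable_mul_of_summable_norm hf.summable.norm hg.summable.norm)

/-- The period `2πi` of the exponential function. -/
noncomputable def twoPiI : ℂ := 2 * Real.pi * Complex.I

/-- The coefficients, independent of the row, with which the entries of the interpolation matrix
expand in the double series of `hasSum_interpEntry_eq`. -/
noncomputable def colCoeff (p : ℕ × ℕ) (i k : ℕ) : ℂ :=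
  (if i ≤ p.1 then (k : ℂ) ^ (p.1 - i) / (p.1 - i).factorial else 0) *
    ((-(k : ℂ)) ^ p.2 / p.2.factorial)

-- The identity `(1 + u) ^ k = exp (k * (s * y + log (1 + u))) * exp (-k * s * (y - 2πi))`, valid
-- because `exp (k * s * 2πi) = 1`, with both exponentials expanded.
theorem hasSum_interpEntry_eq (y : ℂ) (s t i k : ℕ) :
    HasSum (fun p : ℕ × ℕ => interpEntry y s t p.1 0 * ((s : ℂ) * (y - twoPiI)) ^ p.2 *
      colCoeff p i k) (interpEntry y s t i k) := by
  have hrow : HasSum (fun a : ℕ => (if i ≤ a then (k : ℂ) ^ (a - i) / (a - i).factorial else 0) *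
      interpEntry y s t a 0) (Complex.exp (k * (s * y)) * interpEntry y s t i k) := by
    rw [← (add_right_injective i).hasSum_iff]
    · simpa [Function.comp_def] using hasSum_interpEntry y s t i k
    · intro a ha
      rw [if_neg fun h => ha ⟨a - i, Nat.add_sub_cancel' h⟩, zero_mul]
  have hexp := hasSum_pow_div_factorial_mul_pow (-(k : ℂ)) (s * (y - twoPiI))
  have hperiod : Complex.exp (k * (s * y)) * Complex.exp (-k * (s * (y - twoPiI))) = 1 := by
    rw [← Complex.exp_add, Complex.exp_eq_one_iff]
    exact ⟨k * s, by rw [twoPiI]; push_cast; ring⟩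
  have hprod := hasSum_mul_prod hrow hexp
  rw [mul_right_comm, hperiod, one_mul] at hprod
  refine hprod.congr_fun fun p => ?_
  rw [colCoeff]
  ring

/-! ### The analytic upper bound -/

theorem norm_colCoeff_le {R : ℝ} (hR : 0 < R) (p : ℕ × ℕ) (i k : ℕ) :
    ‖colCoeff p i k‖ ≤ (R⁻¹) ^ p.1 * (R ^ i * Real.exp (R + 1) ^ k) := by
  obtain ⟨a, b⟩ := p
  have hsnd : ‖(-(k : ℂ)) ^ b / b.factorial‖ ≤ Real.exp 1 ^ k := by
    rw [norm_div, norm_pow, norm_neg, Complex.norm_natCast, Complex.norm_natCast,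
      ← Real.exp_nat_mul, mul_one]
    exact Real.pow_div_factorial_le_exp _ (Nat.cast_nonneg k) b
  have hfst : ‖(if i ≤ a then (k : ℂ) ^ (a - i) / (a - i).factorial else 0)‖ ≤
      (R⁻¹) ^ a * (R ^ i * Real.exp R ^ k) := by
    split_ifs with h
    · have hpow : (R⁻¹) ^ a * R ^ i * R ^ (a - i) = 1 := by
        rw [mul_assoc, ← pow_add, Nat.add_sub_cancel' h, ← mul_pow, inv_mul_cancel₀ hR.ne', one_pow]
      rw [norm_div, norm_pow, Complex.norm_natCast, Complex.norm_natCast, ← Real.exp_nat_mul]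
      calc (k : ℝ) ^ (a - i) / (a - i).factorial
          = (R⁻¹) ^ a * R ^ i * R ^ (a - i) * ((k : ℝ) ^ (a - i) / (a - i).factorial) := by
            rw [hpow, one_mul]
        _ = (R⁻¹) ^ a * R ^ i * (((k : ℝ) * R) ^ (a - i) / (a - i).factorial) := by
            rw [mul_pow]; ring
        _ ≤ (R⁻¹) ^ a * R ^ i * Real.exp (k * R) := by
            gcongr
            exact Real.pow_div_factorial_le_exp _ (by positivity) _
        _ = _ := by ring
    · rw [norm_zero]
      positivity
  rw [colCoeff, norm_mul]
  calc _ ≤ ((R⁻¹) ^ a * (R ^ i * Real.exp R ^ k)) * Real.exp 1 ^ k := by gcongr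
    _ = _ := by rw [Real.exp_add, mul_pow]; ring

theorem sum_geometric_finset_le {q : ℝ} (h0 : 0 ≤ q) (h1 : q < 1) (F : Finset ℕ) :
    ∑ a ∈ F, q ^ a ≤ (1 - q)⁻¹ := by
  rw [← tsum_geometric_of_lt_one h0 h1]
  exact (summable_geometric_of_lt_one h0 h1).sum_le_tsum F fun _ _ => by positivity

theorem sum_geometric_mul_geometric_le {q q' : ℝ} (h0 : 0 ≤ q) (h1 : q < 1) (h0' : 0 ≤ q')
    (h1' : q' < 1) (F : Finset (ℕ × ℕ)) :
    ∑ p ∈ F, q ^ p.1 * q' ^ p.2 ≤ (1 - q)⁻¹ * (1 - q')⁻¹ := by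
  classical
  calc ∑ p ∈ F, q ^ p.1 * q' ^ p.2
      ≤ ∑ p ∈ F.image Prod.fst ×ˢ F.image Prod.snd, q ^ p.1 * q' ^ p.2 :=
        Finset.sum_le_sum_of_subset_of_nonneg Finset.subset_product fun _ _ _ => by positivity
    _ = (∑ a ∈ F.image Prod.fst, q ^ a) * ∑ b ∈ F.image Prod.snd, q' ^ b := by
        rw [Finset.sum_mul_sum, Finset.sum_product]
    _ ≤ (1 - q)⁻¹ * (1 - q')⁻¹ :=
        mul_le_mul (sum_geometric_finset_le h0 h1 _) (sum_geometric_finset_le h0' h1' _)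
          (Finset.sum_nonneg fun _ _ => by positivity) (inv_nonneg.mpr (by linarith))

section UpperBound

variable {S : ℕ} {β : ℂ} {R : ℝ} {M : ℕ}

theorem sum_norm_interpEntry_mul_le {s t T : ℕ} (hs : s ≤ S) (ht : t ≤ T) (hR0 : 0 < R)
    (hR : (S * ‖β‖ + 1) * Real.exp 1 ≤ 10 / 11 * R)
    (hz : S * ‖β - twoPiI‖ * Real.exp 1 ^ M ≤ 1 / 2) (F : Finset (ℕ × ℕ)) :
    ∑ p ∈ F, ‖interpEntry β s t p.1 0 * ((s : ℂ) * (β - twoPiI)) ^ p.2‖ * (R⁻¹) ^ p.1 *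
      Real.exp ((p.1 + p.2 * M : ℕ) : ℝ) ≤ 2 ^ T * 22 := by
  have hsS : (s : ℝ) ≤ S := by exact_mod_cast hs
  have hq : (s * ‖β‖ + 1) * Real.exp 1 * R⁻¹ ≤ 10 / 11 := by
    rw [mul_inv_le_iff₀ hR0]
    refine le_trans ?_ hR
    gcongr
  have hq' : s * ‖β - twoPiI‖ * Real.exp 1 ^ M ≤ 1 / 2 := by
    refine le_trans ?_ hz
    gcongr
  set q : ℝ := (s * ‖β‖ + 1) * Real.exp 1 * R⁻¹
  set q' : ℝ := s * ‖β - twoPiI‖ * Real.exp 1 ^ M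
  have hterm (p : ℕ × ℕ) :
      ‖interpEntry β s t p.1 0 * ((s : ℂ) * (β - twoPiI)) ^ p.2‖ * (R⁻¹) ^ p.1 *
        Real.exp ((p.1 + p.2 * M : ℕ) : ℝ) ≤ 2 ^ T * (q ^ p.1 * q' ^ p.2) := by
    have hentry : ‖interpEntry β s t p.1 0‖ ≤ 2 ^ T * (s * ‖β‖ + 1) ^ p.1 := by
      refine (norm_interpEntry_le _ _ _ _ _).trans ?_
      rw [pow_zero, one_mul]
      gcongr
      exact one_le_two
    have hexp : Real.exp ((p.1 + p.2 * M : ℕ) : ℝ) =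
        Real.exp 1 ^ p.1 * (Real.exp 1 ^ M) ^ p.2 := by
      rw [← Real.exp_one_pow, pow_add, mul_comm p.2, pow_mul]
    rw [norm_mul, norm_pow, norm_mul, Complex.norm_natCast, hexp]
    calc _ ≤ 2 ^ T * (s * ‖β‖ + 1) ^ p.1 * (s * ‖β - twoPiI‖) ^ p.2 * (R⁻¹) ^ p.1 *
          (Real.exp 1 ^ p.1 * (Real.exp 1 ^ M) ^ p.2) := by gcongr
      _ = _ := by simp only [q, q', mul_pow]; ring
  calc _ ≤ ∑ p ∈ F, 2 ^ T * (q ^ p.1 * q' ^ p.2) := Finset.sum_le_sum fun p _ => hterm p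
    _ = 2 ^ T * ∑ p ∈ F, q ^ p.1 * q' ^ p.2 := (Finset.mul_sum _ _ _).symm
    _ ≤ 2 ^ T * ((1 - q)⁻¹ * (1 - q')⁻¹) := by
        gcongr
        exact sum_geometric_mul_geometric_le (by positivity) (by linarith) (by positivity)
          (by linarith) F
    _ ≤ 2 ^ T * ((1 - 10 / 11)⁻¹ * (1 - 1 / 2)⁻¹) := by
        have := inv_nonneg.mpr (by linarith : 0 ≤ 1 - q')
        gcongr
    _ = 2 ^ T * 22 := by norm_num

theorem norm_interpDet_le {n K T : ℕ} (f : Fin n × Fin K → Fin S × Fin T) (hR0 : 0 < R)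
    (hR : (S * ‖β‖ + 1) * Real.exp 1 ≤ 10 / 11 * R)
    (hz : S * ‖β - twoPiI‖ * Real.exp 1 ^ (n * K) ≤ 1 / 2) :
    ‖interpDet f β‖ ≤ (n * K).factorial *
      (R ^ (K * n.choose 2) * Real.exp (R + 1) ^ (n * K.choose 2)) *
      Real.exp (-((n * K).choose 2 : ℕ)) * (2 ^ T * 22) ^ (n * K) := by
  classical
  set x : Fin n × Fin K → ℕ × ℕ → ℂ := fun μ p =>
    interpEntry β (f μ).1 (f μ).2 p.1 0 * (((f μ).1 : ℂ) * (β - twoPiI)) ^ p.2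
  set c : ℕ × ℕ → Fin n × Fin K → ℂ := fun p l => colCoeff p l.1 l.2
  have hcard : Fintype.card (Fin n × Fin K) = n * K := by simp
  have hpartial (F : Finset (ℕ × ℕ)) : ‖(Matrix.of fun μ l => ∑ p ∈ F, x μ p * c p l).det‖ ≤
      (n * K).factorial * (R ^ (K * n.choose 2) * Real.exp (R + 1) ^ (n * K.choose 2)) *
      Real.exp (-((n * K).choose 2 : ℕ)) * (2 ^ T * 22) ^ (n * K) := by
    have hdet := norm_det_sum_mul_le (x := x) (c := c) (F := F) (r := fun p => (R⁻¹) ^ p.1)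
      (w := fun p => p.1 + p.2 * (n * K)) (W := (n * K).choose 2) (B := fun _ => 2 ^ T * 22)
      (V := (n * K).factorial * (R ^ (K * n.choose 2) * Real.exp (R + 1) ^ (n * K.choose 2)))
      (fun p => by positivity) (by positivity) (fun φ => ?_)
      (fun μ => sum_norm_interpEntry_mul_le (f μ).1.2.le (f μ).2.2.le hR0 hR hz F)
      (fun φ hφ => hcard ▸ choose_two_card_le_sum_weight_of_injective hφ)
    · rwa [Finset.prod_const, Finset.card_univ, hcard] at hdet
    · refine (norm_det_le_of_norm_le_mul (r := fun μ => (R⁻¹) ^ (φ μ).1)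
        fun μ l => norm_colCoeff_le hR0 (φ μ) l.1 l.2).trans_eq ?_
      simp only [hcard, Finset.prod_mul_distrib, Finset.prod_pow_eq_pow_sum, sum_fin_prod_fst,
        sum_fin_prod_snd]
      ring
  have hlim : Filter.Tendsto (fun F : Finset (ℕ × ℕ) =>
      (Matrix.of fun μ l => ∑ p ∈ F, x μ p * c p l)) Filter.atTop
      (nhds ((interpMatrix S T n K β).submatrix f id)) :=
    tendsto_pi_nhds.mpr fun μ => tendsto_pi_nhds.mpr fun l =>
      hasSum_interpEntry_eq β (f μ).1 (f μ).2 l.1 l.2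
  exact le_of_tendsto' ((continuous_id.matrix_det.tendsto _).comp hlim).norm hpartial

end UpperBound

/-! ### Choice of parameters -/

section Parameters

theorem log_le_nat_mul_of_le_two_pow {x : ℝ} {n : ℕ} (hx : 0 < x) (h : x ≤ 2 ^ n) :
    Real.log x ≤ n * 0.6932 :=
  calc Real.log x ≤ Real.log (2 ^ n) := Real.log_le_log hx h
    _ = n * Real.log 2 := Real.log_pow _ _
    _ ≤ n * 0.6932 := by gcongr; linarith [Real.log_two_lt_d9]

theorem nat_mul_le_log_of_two_pow_le {x : ℝ} {n : ℕ} (h : 2 ^ n ≤ x) :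
    n * 0.6931 ≤ Real.log x :=
  calc n * 0.6931 ≤ n * Real.log 2 := by gcongr; linarith [Real.log_two_gt_d9]
    _ = Real.log (2 ^ n) := (Real.log_pow _ _).symm
    _ ≤ Real.log x := Real.log_le_log (by positivity) h

theorem log_nat_mul_le_add_log {m n : ℕ} {x : ℝ} (hm : 0 < m) (hmn : m ≤ 2 ^ n) (hx : 0 < x) :
    Real.log (m * x) ≤ n * 0.6932 + Real.log x := by
  rw [Real.log_mul (by positivity) hx.ne']
  gcongr
  exact log_le_nat_mul_of_le_two_pow (by exact_mod_cast hm) (by exact_mod_cast hmn)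

variable {D δ S K B : ℝ}

theorem mul_le_of_sixty_mul_le (hD : 2 ≤ D) (hS : 60 * (D * (1 + Real.log D)) ≤ S) :
    101 * D ≤ S := by
  have hlogD : (1 : ℕ) * 0.6931 ≤ Real.log D := nat_mul_le_log_of_two_pow_le (by simpa using hD)
  push_cast at hlogD
  nlinarith

theorem le_log_of_sixty_mul_le (hD : 2 ≤ D) (hS : 60 * (D * (1 + Real.log D)) ≤ S) :
    4.85 ≤ Real.log S := by
  have hDS := mul_le_of_sixty_mul_le hD hS
  have hlogS : (7 : ℕ) * 0.6931 ≤ Real.log S := nat_mul_le_log_of_two_pow_le (by linarith)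
  push_cast at hlogS
  linarith

theorem degree_mul_log_le (hD : 2 ≤ D) (hS : 60 * (D * (1 + Real.log D)) ≤ S) :
    D * (5.16 + Real.log S) ≤ 0.1055 * S := by
  have hu : (1 : ℕ) * 0.6931 ≤ Real.log D := nat_mul_le_log_of_two_pow_le (by simpa using hD)
  push_cast at hu
  set u := Real.log D with hu_def
  obtain ⟨r, hr, rfl⟩ : ∃ r, 1 ≤ r ∧ S = r * (60 * (D * (1 + u))) := by
    have hpos : 0 < 60 * (D * (1 + u)) := by positivity
    exact ⟨S / (60 * (D * (1 + u))), (one_le_div hpos).mpr hS, (div_mul_cancel₀ _ hpos.ne').symm⟩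
  have hlog : Real.log (r * (60 * (D * (1 + u)))) ≤ 4.16 + 2 * u + (r - 1) := by
    have hlog60 := log_nat_mul_le_add_log (m := 60) (n := 6) (x := D * (1 + u)) (by norm_num)
      (by norm_num) (by positivity)
    have hlogr := Real.log_le_sub_one_of_pos (show 0 < r by linarith)
    have hlogu := Real.log_le_sub_one_of_pos (show 0 < 1 + u by linarith)
    push_cast at hlog60
    rw [Real.log_mul (x := D) (by linarith) (by linarith), ← hu_def] at hlog60
    rw [Real.log_mul (by linarith) (by positivity)]
    linarith
  calc D * (5.16 + Real.log (r * (60 * (D * (1 + u))))) ≤ D * (r * (6.33 * (1 + u))) := by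
        gcongr
        nlinarith
    _ = 0.1055 * (r * (60 * (D * (1 + u)))) := by ring

theorem arithmetic_cost_le (hS : 0 < S) (hδ : 0 ≤ δ) (hδS : 101 * δ ≤ S)
    (hδlog : δ * (5.16 + Real.log S) ≤ 0.1055 * S) (hK : 23 ≤ K) :
    δ * (Real.log (60 * S * K) + Real.log 4 * (61 * K) * (1 + Real.log (60 * S)) +
      61 * K * Real.log 2) ≤ 9.37 * (S * K) := by
  have hlog60S : 1 + Real.log (60 * S) ≤ 5.16 + Real.log S := by
    have := log_nat_mul_le_add_log (m := 60) (n := 6) (by norm_num) (by norm_num) hS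
    push_cast at this
    linarith
  have hlog2 : Real.log 2 ≤ 0.6932 := by linarith [Real.log_two_lt_d9]
  have hlog4 : Real.log 4 ≤ 1.3864 := by
    have := log_le_nat_mul_of_le_two_pow (x := 4) (n := 2) (by norm_num) (by norm_num)
    push_cast at this
    linarith
  have hlogM : Real.log (60 * S * K) ≤ 5.16 + Real.log S + K := by
    rw [Real.log_mul (by positivity) (by positivity)]
    linarith [Real.log_le_sub_one_of_pos (show 0 < K by linarith)]
  have hδK : δ * K ≤ S / 101 * K := by gcongr; linarith
  have hfactorial : δ * Real.log (60 * S * K) ≤ 0.02 * (S * K) := by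
    have : δ * Real.log (60 * S * K) ≤ δ * (5.16 + Real.log S + K) := by gcongr
    nlinarith
  have hdenom : δ * (Real.log 4 * (61 * K) * (1 + Real.log (60 * S))) ≤ 8.93 * (S * K) :=
    calc δ * (Real.log 4 * (61 * K) * (1 + Real.log (60 * S)))
        ≤ δ * (Real.log 4 * (61 * K) * (5.16 + Real.log S)) := by gcongr
      _ = Real.log 4 * (61 * K) * (δ * (5.16 + Real.log S)) := by ring
      _ ≤ Real.log 4 * (61 * K) * (0.1055 * S) := by gcongr
      _ ≤ 1.3864 * (61 * K) * (0.1055 * S) := by gcongr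
      _ ≤ 8.93 * (S * K) := by nlinarith
  have hbinom : δ * (61 * K * Real.log 2) ≤ 0.42 * (S * K) :=
    calc δ * (61 * K * Real.log 2) = 61 * Real.log 2 * (δ * K) := by ring
      _ ≤ 61 * 0.6932 * (S / 101 * K) := by gcongr
      _ ≤ 0.42 * (S * K) := by nlinarith
  linarith

theorem height_cost_le (hS : 0 < S) (hK : 3 * (B + δ * (Real.log S + 3)) ≤ K) (hδ : 1 ≤ δ)
    (hK23 : 23 ≤ K) :
    (δ - 1) * (30 * S * Real.log S) + 30 * S * (Real.log (19 * S) + B) ≤ 10.65 * (S * K) := by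
  have hlog19S := log_nat_mul_le_add_log (m := 19) (n := 5) (by norm_num) (by norm_num) hS
  push_cast at hlog19S
  calc (δ - 1) * (30 * S * Real.log S) + 30 * S * (Real.log (19 * S) + B)
      ≤ (δ - 1) * (30 * S * Real.log S) + 30 * S * (5 * 0.6932 + Real.log S + B) := by gcongr
    _ = 10 * S * (3 * (B + δ * Real.log S) + 10.398) := by ring
    _ ≤ 10 * S * (1.065 * K) := by gcongr; linarith
    _ = 10.65 * (S * K) := by ring

theorem parameters_lt (hD : 2 ≤ D) (hδ : 1 ≤ δ) (hδD : δ ≤ D)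
    (hS : 60 * (D * (1 + Real.log D)) ≤ S) (hB : 0 ≤ B) (hK : 3 * (B + δ * (Real.log S + 3)) ≤ K) :
    δ * (Real.log (60 * S * K) + Real.log 4 * (61 * K) * (1 + Real.log (60 * S)) +
      61 * K * Real.log 2) + (δ - 1) * (K / 2 * Real.log 2 + 30 * S * Real.log S) +
      30 * S * (Real.log (19 * S) + B) + K / 2 * (19 * S + 1) + Real.log 22 + 1 / 2 <
      30 * S * K := by
  have hDS := mul_le_of_sixty_mul_le hD hS
  have hlogS := le_log_of_sixty_mul_le hD hS
  have hS0 : 0 < S := by linarith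
  have hK23 : 23 ≤ K := by nlinarith
  have hδlog : δ * (5.16 + Real.log S) ≤ 0.1055 * S :=
    (mul_le_mul_of_nonneg_right hδD (by linarith)).trans (degree_mul_log_le hD hS)
  have harith := arithmetic_cost_le hS0 (by linarith) (by linarith) hδlog hK23
  have hheight := height_cost_le hS0 hK hδ hK23
  have hpow : (δ - 1) * (K / 2 * Real.log 2) ≤ S / 101 * (K / 2 * 0.6932) := by
    gcongr
    · linarith
    · linarith [Real.log_two_lt_d9]
  have hlog22 := log_le_nat_mul_of_le_two_pow (x := 22) (n := 5) (by norm_num) (by norm_num)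
  push_cast at hlog22
  have hKS : 202 * K ≤ S * K := by gcongr; linarith
  nlinarith

end Parameters

/-! ### Distance from algebraic numbers to the period -/

theorem log_factorial_le (n : ℕ) : Real.log n.factorial ≤ n * Real.log n := by
  rw [← Real.log_pow]
  exact Real.log_le_log (by positivity) (by exact_mod_cast n.factorial_le_pow)

theorem cast_mul_choose_two_le (a b : ℕ) : ((a * b.choose 2 : ℕ) : ℝ) ≤ a * b * (b / 2) := by
  rw [Nat.cast_mul, Nat.cast_choose_two, mul_assoc]
  gcongr ?_ * ?_
  nlinarith [b.cast_nonneg (α := ℝ)]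

theorem norm_twoPiI : ‖twoPiI‖ = 2 * Real.pi := by
  simp [twoPiI, abs_of_pos Real.pi_pos]

theorem log_interpDetBound_le {S : ℕ} (hS : 0 < S) (T n K : ℕ) :
    Real.log (interpDetBound S T n K) ≤ n * K *
      (Real.log (n * K) + T * Real.log 2 + K / 2 * Real.log 2 + n / 2 * Real.log S) := by
  have hfactorial := log_factorial_le (n * K)
  have hK := mul_le_mul_of_nonneg_right (cast_mul_choose_two_le n K)
    (Real.log_nonneg one_le_two)
  have hn := mul_le_mul_of_nonneg_right (cast_mul_choose_two_le K n) (Real.log_natCast_nonneg S)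
  rw [interpDetBound, Real.log_mul (by positivity) (by positivity),
    Real.log_mul (by positivity) (by positivity), Real.log_mul (by positivity) (by positivity),
    Real.log_pow, Real.log_pow, Real.log_pow, Real.log_pow]
  push_cast at hfactorial hK hn ⊢
  linarith

theorem neg_log_norm_interpDet_le {Q : ℤ[X]} (hQ : Irreducible Q) (hdeg : Q.natDegree ≠ 0) {β : ℂ}
    (hβ : aeval β Q = 0) {S T n K : ℕ} (hS : 0 < S) {f : Fin n × Fin K → Fin S × Fin T}
    (hf : interpDet f β ≠ 0) :
    -Real.log ‖interpDet f β‖ ≤ n * K * (Q.natDegree * Real.log (logDenom T n) +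
      (Q.natDegree - 1) *
        (Real.log (n * K) + T * Real.log 2 + K / 2 * Real.log 2 + n / 2 * Real.log S) +
      n / 2 * Real.log M(Q)) := by
  have hM : 1 ≤ M(Q) := one_le_mahlerMeasure_of_ne_zero hQ.ne_zero
  have hdeg1 : (1 : ℝ) ≤ Q.natDegree := by exact_mod_cast Nat.one_le_iff_ne_zero.mpr hdeg
  have hq : 0 < (logDenom T n : ℝ) := by exact_mod_cast logDenom_pos T n
  have hB : 0 < interpDetBound S T n K := by rw [interpDetBound]; positivity
  obtain ⟨G, hG, hGeval⟩ := exists_intPolynomial_interpDet (F := ℂ) f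
  have hnorm (y : ℂ) : ‖aeval y G‖ = (logDenom T n : ℝ) ^ (n * K) * ‖interpDet f y‖ := by
    rw [hGeval, norm_mul, norm_pow, Complex.norm_natCast]
  have hliouville : 1 ≤ ‖aeval β G‖ * ((logDenom T n : ℝ) ^ (n * K) * interpDetBound S T n K) ^
      (Q.natDegree - 1) * M(Q) ^ (K * n.choose 2) := by
    refine one_le_norm_aeval_mul hQ hdeg hβ ?_ hG fun y => ?_
    · rw [hGeval]
      exact mul_ne_zero (pow_ne_zero _ (by exact_mod_cast (logDenom_pos T n).ne')) hf
    · rw [hnorm, mul_assoc]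
      gcongr
      exact norm_interpDet_le_max_pow f y
  have hlog := Real.log_le_log one_pos hliouville
  rw [hnorm, Real.log_one, Real.log_mul (by positivity) (by positivity),
    Real.log_mul (by positivity) (by positivity), Real.log_mul (by positivity) (by positivity),
    Real.log_pow, Real.log_pow, Real.log_pow, Real.log_mul (by positivity) (by positivity),
    Real.log_pow, Nat.cast_pred (Nat.pos_of_ne_zero hdeg)] at hlog
  have hBlog := mul_le_mul_of_nonneg_left (log_interpDetBound_le hS T n K) (sub_nonneg.mpr hdeg1)
  have hMlog := mul_le_mul_of_nonneg_right (cast_mul_choose_two_le K n) (Real.log_nonneg hM)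
  push_cast at hlog hMlog
  linarith

theorem log_norm_interpDet_le {β : ℂ} {S T n K : ℕ} {f : Fin n × Fin K → Fin S × Fin T}
    (hf : interpDet f β ≠ 0) {R : ℝ} (hR1 : 1 ≤ R) (hR : (S * ‖β‖ + 1) * Real.exp 1 ≤ 10 / 11 * R)
    (hz : S * ‖β - twoPiI‖ * Real.exp 1 ^ (n * K) ≤ 1 / 2) :
    Real.log ‖interpDet f β‖ ≤ n * K * (Real.log (n * K) + n / 2 * Real.log R + K / 2 * (R + 1) +
      T * Real.log 2 + Real.log 22 - (n * K - 1) / 2) := by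
  have hlog := Real.log_le_log (norm_pos_iff.mpr hf) (norm_interpDet_le f (by linarith) hR hz)
  rw [Real.log_mul (by positivity) (by positivity), Real.log_mul (by positivity) (by positivity),
    Real.log_mul (by positivity) (by positivity), Real.log_mul (by positivity) (by positivity),
    Real.log_pow, Real.log_pow, Real.log_pow, Real.log_exp, Real.log_exp,
    Real.log_mul (by positivity) (by positivity), Real.log_pow, Nat.cast_choose_two] at hlog
  have hfactorial := log_factorial_le (n * K)
  have hn := mul_le_mul_of_nonneg_right (cast_mul_choose_two_le K n) (Real.log_nonneg hR1)
  have hK := mul_le_mul_of_nonneg_right (cast_mul_choose_two_le n K)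
    (show 0 ≤ R + 1 by linarith)
  push_cast at hlog hfactorial hn hK
  linarith

theorem ne_zero_and_norm_le_of_near_twoPiI {β : ℂ} (h : ‖β - twoPiI‖ ≤ 0.005) :
    β ≠ 0 ∧ ‖β‖ ≤ 6.29 := by
  have hpi_lt := Real.pi_lt_d4
  have hpi_gt := Real.pi_gt_d4
  have hlower := norm_sub_norm_le twoPiI β
  have hupper := norm_le_norm_add_norm_sub' β twoPiI
  rw [norm_sub_rev] at hlower
  rw [norm_twoPiI] at hlower hupper
  exact ⟨norm_pos_iff.mp (by linarith), by linarith⟩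

theorem exists_interpDet_sixty_mul_ne_zero {β : ℂ} (hβ : β ≠ 0) {S : ℕ} (hS : 0 < S) (K : ℕ) :
    ∃ f : Fin (60 * S) × Fin K → Fin S × Fin (61 * K), interpDet f β ≠ 0 := by
  refine exists_interpDet_ne_zero (by lia) hβ ?_
  calc K * (60 * S - 1) ≤ K * (60 * S) := Nat.mul_le_mul_left _ (by lia)
    _ < S * (60 * K + 1) := by linarith
    _ = S * (61 * K - K + 1) := by congr 1; lia

theorem norm_sub_twoPiI_le {β : ℂ} {S M : ℕ} (hS : 100 ≤ S)
    (h : S * ‖β - twoPiI‖ * Real.exp 1 ^ M ≤ 1 / 2) : ‖β - twoPiI‖ ≤ 0.005 := by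
  have hS' : (100 : ℝ) ≤ S := by exact_mod_cast hS
  have hexp : (1 : ℝ) ≤ Real.exp 1 ^ M := one_le_pow₀ (Real.one_le_exp zero_le_one)
  have : 100 * ‖β - twoPiI‖ ≤ 1 / 2 :=
    calc 100 * ‖β - twoPiI‖ ≤ S * ‖β - twoPiI‖ := by gcongr
      _ ≤ S * ‖β - twoPiI‖ * Real.exp 1 ^ M := le_mul_of_one_le_right (by positivity) hexp
      _ ≤ 1 / 2 := h
  linarith

-- If the root were closer, a nonzero interpolation determinant would violate the Liouville
-- inequality.
theorem lt_mul_norm_root_sub_twoPiI {Q : ℤ[X]} (hQ : Irreducible Q) (hdeg : Q.natDegree ≠ 0) {β : ℂ}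
    (hβ : aeval β Q = 0) {D : ℕ} (hD : 2 ≤ D) (hdegD : Q.natDegree ≤ D) {S K : ℕ}
    (hS : 60 * (D * (1 + Real.log D)) ≤ S)
    (hK : 3 * (Real.log M(Q) + Q.natDegree * (Real.log S + 3)) ≤ K) :
    1 / 2 < S * ‖β - twoPiI‖ * Real.exp 1 ^ (60 * S * K) := by
  by_contra! hz
  have hD' : (2 : ℝ) ≤ D := by exact_mod_cast hD
  have hM : 0 ≤ Real.log M(Q) :=
    Real.log_nonneg (one_le_mahlerMeasure_of_ne_zero hQ.ne_zero)
  have hdeg1 : (1 : ℝ) ≤ Q.natDegree := by exact_mod_cast Nat.one_le_iff_ne_zero.mpr hdeg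
  have hS100 : (100 : ℝ) ≤ S := by linarith [mul_le_of_sixty_mul_le hD' hS]
  have hK0 : (0 : ℝ) < K := by nlinarith [Real.log_natCast_nonneg S]
  obtain ⟨hβ0, hβnorm⟩ := ne_zero_and_norm_le_of_near_twoPiI
    (norm_sub_twoPiI_le (by exact_mod_cast hS100) hz)
  have hSpos : 0 < S := by exact_mod_cast show (0 : ℝ) < S by linarith
  obtain ⟨f, hf⟩ := exists_interpDet_sixty_mul_ne_zero hβ0 hSpos K
  have hlower := neg_log_norm_interpDet_le hQ hdeg hβ hSpos hf
  have hupper := log_norm_interpDet_le hf (R := 19 * S) (by linarith)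
    (calc (S * ‖β‖ + 1) * Real.exp 1 ≤ (S * 6.29 + S / 100) * 2.7183 := by
            gcongr
            · linarith
            · linarith [Real.exp_one_lt_d9]
      _ ≤ 10 / 11 * (19 * S) := by linarith) hz
  have hdenom := mul_le_mul_of_nonneg_left (log_logDenom_le (61 * K) (60 * S))
    (Q.natDegree.cast_nonneg (α := ℝ))
  have hparam := parameters_lt hD' hdeg1 (by exact_mod_cast hdegD) hS hM hK
  push_cast at hlower hupper hdenom
  have hfactor : 0 < 60 * (S : ℝ) * K := by positivity
  have hsum := add_le_add hlower hupper
  rw [neg_add_cancel, ← mul_add, mul_nonneg_iff_of_pos_left hfactor] at hsum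
  linarith

/-! ### Integer polynomials at the period -/

theorem aeval_derivative_ne_zero_of_irreducible {F : Type*} [Field F] [Algebra ℚ F] {Q : ℤ[X]}
    (hQ : Irreducible Q) (hdeg : Q.natDegree ≠ 0) {β : F} (hβ : aeval β Q = 0) :
    aeval β (derivative Q) ≠ 0 := by
  have hirr : Irreducible (Q.map (algebraMap ℤ ℚ)) :=
    ((hQ.isPrimitive hdeg).irreducible_iff_irreducible_map_fraction_map (K := ℚ)).mp hQ
  have h := hirr.separable.aeval_derivative_ne_zero (x := β) (by rwa [aeval_map_algebraMap])
  rwa [derivative_map, aeval_map_algebraMap] at h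

theorem isometry_intCast_complex : Isometry (Int.castRingHom ℂ) :=
  Isometry.of_dist_eq fun m n => by simp [dist_eq_norm, ← Int.cast_sub, Int.norm_eq_abs]

theorem norm_aeval_derivative_le (Q : ℤ[X]) (y : ℂ) :
    ‖aeval y (derivative Q)‖ ≤
      Q.natDegree * 2 ^ (Q.natDegree - 1) * M(Q) * max 1 ‖y‖ ^ (Q.natDegree - 1) := by
  rcases eq_or_ne Q.natDegree 0 with h0 | h0
  · simp [derivative_of_natDegree_zero h0, h0]
  obtain ⟨n, hn⟩ := Nat.exists_eq_succ_of_ne_zero h0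
  have hterm : ∀ i ∈ Finset.range (n + 1), ‖(derivative Q).coeff i • y ^ i‖ ≤
      n.choose i * ((n + 1) * M(Q) * max 1 ‖y‖ ^ n) := by
    intro i hi
    have hpow : ‖y‖ ^ i ≤ max 1 ‖y‖ ^ n :=
      (pow_le_pow_left₀ (norm_nonneg _) (le_max_right _ _) i).trans
        (pow_le_pow_right₀ (le_max_left _ _) (Finset.mem_range_succ_iff.mp hi))
    have hM : 0 ≤ M(Q) := mapMahlerMeasure_nonneg _ _
    have hcoeff := norm_coeff_le_choose_mul_mapMahlerMeasure _ isometry_intCast_complex (i + 1) Q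
    have hchoose : ((n + 1).choose (i + 1) : ℝ) * (i + 1) = (n + 1) * n.choose i := by
      exact_mod_cast (Nat.add_one_mul_choose_eq n i).symm
    rw [hn] at hcoeff
    calc ‖(derivative Q).coeff i • y ^ i‖ = ‖Q.coeff (i + 1)‖ * (i + 1) * ‖y‖ ^ i := by
          rw [coeff_derivative, zsmul_eq_mul, norm_mul, norm_pow, Complex.norm_intCast,
            Int.norm_eq_abs]
          push_cast
          rw [abs_mul, abs_of_nonneg (show (0 : ℝ) ≤ i + 1 by positivity)]
      _ ≤ ((n + 1).choose (i + 1) * M(Q)) * (i + 1) * max 1 ‖y‖ ^ n := by gcongr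
      _ = n.choose i * ((n + 1) * M(Q) * max 1 ‖y‖ ^ n) := by
          linear_combination M(Q) * max 1 ‖y‖ ^ n * hchoose
  have hsum : ∑ i ∈ Finset.range (n + 1), (n.choose i : ℝ) = 2 ^ n := by
    exact_mod_cast Nat.sum_range_choose n
  calc ‖aeval y (derivative Q)‖
      ≤ ∑ i ∈ Finset.range (n + 1), n.choose i * ((n + 1) * M(Q) * max 1 ‖y‖ ^ n) := by
        rw [aeval_eq_sum_range' (hn ▸ natDegree_derivative_lt h0)]
        exact norm_sum_le_of_le _ hterm
    _ = Q.natDegree * 2 ^ (Q.natDegree - 1) * M(Q) * max 1 ‖y‖ ^ (Q.natDegree - 1) := by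
        rw [← Finset.sum_mul, hsum, hn]
        push_cast [Nat.succ_eq_add_one, Nat.add_sub_cancel]
        ring

theorem eval_derivative_of_roots_eq_cons {R : Type*} [CommRing R] [IsDomain R] {p : R[X]}
    (hp : p.Splits) {β : R} {r : Multiset R} (hr : p.roots = β ::ₘ r) :
    p.derivative.eval β = p.leadingCoeff * (r.map (β - ·)).prod := by
  conv_lhs => rw [hp.eq_prod_roots, hr]
  simp [derivative_mul, eval_multiset_prod]

-- For the root `β` nearest to `w`, every root `γ` satisfies `‖β - γ‖ ≤ 2 * ‖w - γ‖`.
theorem exists_isRoot_norm_sub_mul_norm_derivative_le {𝕜 : Type*} [NormedField 𝕜] {p : 𝕜[X]}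
    (hp : p.Splits) (hdeg : p.natDegree ≠ 0) (w : 𝕜) :
    ∃ β, p.IsRoot β ∧
      ‖β - w‖ * ‖p.derivative.eval β‖ ≤ 2 ^ (p.natDegree - 1) * ‖p.eval w‖ := by
  classical
  have hcard := hp.natDegree_eq_card_roots
  obtain ⟨β, hβ, hmin⟩ := p.roots.toFinset.exists_min_image (fun γ => ‖γ - w‖) <| by
    rw [Multiset.toFinset_nonempty, ← Multiset.card_pos, ← hcard]
    exact Nat.pos_of_ne_zero hdeg
  rw [Multiset.mem_toFinset] at hβ
  obtain ⟨r, hr⟩ := Multiset.exists_cons_of_mem hβ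
  have hdist : ∀ γ ∈ r, ‖β - γ‖ ≤ 2 * ‖w - γ‖ ^ 1 := fun γ hγ => by
    have hnear := hmin γ (by simp [hr, hγ])
    have htri := norm_sub_le_norm_sub_add_norm_sub β w γ
    rw [norm_sub_rev γ w] at hnear
    linarith
  have hprod := norm_prod_map_le_pow_card_mul (f := (β - ·)) (g := (‖w - ·‖)) hdist
  rw [pow_one, ← norm_prod_map, show r.card = p.natDegree - 1 by simp [hcard, hr]] at hprod
  refine ⟨β, isRoot_of_mem_roots hβ, ?_⟩
  calc ‖β - w‖ * ‖p.derivative.eval β‖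
      = ‖β - w‖ * (‖p.leadingCoeff‖ * ‖(r.map (β - ·)).prod‖) := by
        rw [eval_derivative_of_roots_eq_cons hp hr, norm_mul]
    _ ≤ ‖β - w‖ * (‖p.leadingCoeff‖ * (2 ^ (p.natDegree - 1) * ‖(r.map (w - ·)).prod‖)) := by
        gcongr
    _ = 2 ^ (p.natDegree - 1) * ‖p.eval w‖ := by
        rw [hp.eval_eq_prod_roots, hr, Multiset.map_cons, Multiset.prod_cons, norm_mul, norm_mul,
          norm_sub_rev]
        ring

theorem neg_log_norm_aeval_derivative_le {Q : ℤ[X]} (hQ : Irreducible Q) (hdeg : Q.natDegree ≠ 0)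
    {β : ℂ} (hβ : aeval β Q = 0) :
    -Real.log ‖aeval β (derivative Q)‖ ≤ (Q.natDegree - 1) *
      (Real.log Q.natDegree + (Q.natDegree - 1) * Real.log 2 + 2 * Real.log M(Q)) := by
  have hM : 1 ≤ M(Q) := one_le_mahlerMeasure_of_ne_zero hQ.ne_zero
  have hder := aeval_derivative_ne_zero_of_irreducible hQ hdeg hβ
  have hder0 := norm_ne_zero_iff.mpr hder
  have hdeg0 : (Q.natDegree : ℝ) ≠ 0 := by exact_mod_cast hdeg
  have hlog := Real.log_le_log one_pos (one_le_norm_aeval_mul hQ hdeg hβ hder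
    (natDegree_derivative_le Q) (norm_aeval_derivative_le Q))
  rw [Real.log_one, Real.log_mul (by positivity) (by positivity),
    Real.log_mul hder0 (by positivity), Real.log_pow, Real.log_pow,
    Real.log_mul (by positivity) (by positivity), Real.log_mul hdeg0 (by positivity),
    Real.log_pow, Nat.cast_pred (Nat.pos_of_ne_zero hdeg)] at hlog
  linarith

theorem root_cost_le {δ B S K : ℝ} (hδ : 1 ≤ δ) (hδS : 101 * δ ≤ S) (hB : 0 ≤ B)
    (hK : K ≤ 3 * (B + δ * (Real.log S + 3)) + 1) :
    δ * Real.log 2 + Real.log S + 60 * S * K +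
      (δ - 1) * (Real.log δ + (δ - 1) * Real.log 2 + 2 * B) ≤
        190 * S * (B + δ * (Real.log S + 4)) := by
  have hS : 0 < S := by linarith
  have hlogS : 0 ≤ Real.log S := Real.log_nonneg (by linarith)
  have hlog2 : Real.log 2 ≤ 1 := by linarith [Real.log_two_lt_d9]
  have hlogδ : Real.log δ ≤ Real.log S := Real.log_le_log (by linarith) (by linarith)
  have hderivative : (δ - 1) * (Real.log δ + (δ - 1) * Real.log 2 + 2 * B) ≤
      S * (δ * Real.log S + δ * 1 + 2 * B) := by
    have hlog : Real.log δ ≤ δ * Real.log S := hlogδ.trans (le_mul_of_one_le_left hlogS hδ)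
    have hnonneg : 0 ≤ Real.log δ + (δ - 1) * Real.log 2 + 2 * B :=
      add_nonneg (add_nonneg (Real.log_nonneg hδ)
        (mul_nonneg (by linarith) (Real.log_nonneg one_le_two))) (by linarith)
    exact mul_le_mul (by linarith) (by nlinarith) hnonneg hS.le
  have hKS : 60 * S * K ≤ 60 * S * (3 * (B + δ * (Real.log S + 3)) + 1) := by gcongr
  have hSδ : S ≤ S * δ := le_mul_of_one_le_right hS.le hδ
  have hSB : 0 ≤ S * B := by positivity
  have hSδlog : Real.log S ≤ S * (δ * Real.log S) := by
    rw [← mul_assoc]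
    exact le_mul_of_one_le_left hlogS (by nlinarith)
  nlinarith

theorem exp_neg_le_norm_aeval_of_irreducible {Q : ℤ[X]} (hQ : Irreducible Q)
    (hdeg : Q.natDegree ≠ 0) {D : ℕ} (hD : 2 ≤ D) (hdegD : Q.natDegree ≤ D) {S : ℕ}
    (hS : 60 * (D * (1 + Real.log D)) ≤ S) :
    Real.exp (-(190 * S * (Real.log M(Q) + Q.natDegree * (Real.log S + 4)))) ≤
      ‖aeval twoPiI Q‖ := by
  have hM : 0 ≤ Real.log M(Q) := Real.log_nonneg (one_le_mahlerMeasure_of_ne_zero hQ.ne_zero)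
  have hdeg1 : (1 : ℝ) ≤ Q.natDegree := by exact_mod_cast Nat.one_le_iff_ne_zero.mpr hdeg
  have hdegS : 101 * (Q.natDegree : ℝ) ≤ S :=
    (mul_le_mul_of_nonneg_left (by exact_mod_cast hdegD) (by norm_num)).trans
      (mul_le_of_sixty_mul_le (by exact_mod_cast hD) hS)
  have hSpos : (0 : ℝ) < S := by linarith
  obtain ⟨β, hβ, hnear⟩ := exists_isRoot_norm_sub_mul_norm_derivative_le
    (IsAlgClosed.splits (Q.map (algebraMap ℤ ℂ)))
    (by rwa [natDegree_map_eq_of_injective Int.cast_injective]) twoPiI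
  rw [IsRoot.def, eval_map_algebraMap] at hβ
  rw [derivative_map, eval_map_algebraMap, eval_map_algebraMap,
    natDegree_map_eq_of_injective Int.cast_injective] at hnear
  set K := ⌈3 * (Real.log M(Q) + Q.natDegree * (Real.log S + 3))⌉₊
  have hroot := lt_mul_norm_root_sub_twoPiI hQ hdeg hβ hD hdegD hS (Nat.le_ceil _)
  have hβ0 : 0 < ‖β - twoPiI‖ := by
    by_contra! h
    norm_num [le_antisymm h (norm_nonneg _)] at hroot
  have hder := norm_pos_iff.mpr (aeval_derivative_ne_zero_of_irreducible hQ hdeg hβ)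
  have hval : 0 < ‖aeval twoPiI Q‖ :=
    pos_of_mul_pos_right ((mul_pos hβ0 hder).trans_le hnear) (by positivity)
  have hlogroot := Real.log_le_log (by norm_num) hroot.le
  rw [Real.log_mul (by positivity) (by positivity), Real.log_mul (by positivity) (by positivity),
    Real.log_pow, Real.log_exp, mul_one, one_div, Real.log_inv] at hlogroot
  have hlognear := Real.log_le_log (by positivity) hnear
  rw [Real.log_mul (by positivity) (by positivity), Real.log_mul (by positivity) (by positivity),
    Real.log_pow, Nat.cast_pred (Nat.pos_of_ne_zero hdeg)] at hlognear
  have hcost := root_cost_le hdeg1 hdegS hM (Nat.ceil_lt_add_one (by positivity)).le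
  have hderlog := neg_log_norm_aeval_derivative_le hQ hdeg hβ
  push_cast at hlogroot
  rw [← Real.le_log_iff_exp_le hval]
  linarith

theorem one_le_norm_aeval_of_natDegree_eq_zero {A : Type*} [NormedRing A] [NormOneClass A]
    [NormSMulClass ℤ A] {G : ℤ[X]} (hG : G ≠ 0) (hdeg : G.natDegree = 0) (w : A) :
    1 ≤ ‖aeval w G‖ := by
  obtain ⟨c, rfl⟩ := natDegree_eq_zero.mp hdeg
  rw [aeval_C, eq_intCast, norm_intCast_eq_abs_mul_norm_one, norm_one, mul_one]
  exact_mod_cast Int.one_le_abs (C_ne_zero.mp hG)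

-- Both sides are multiplicative in `G`, so it suffices to treat units and irreducible factors.
theorem exp_neg_le_norm_aeval_twoPiI {D : ℕ} (hD : 2 ≤ D) {S : ℕ}
    (hS : 60 * (D * (1 + Real.log D)) ≤ S) {G : ℤ[X]} (hG : G ≠ 0) (hGD : G.natDegree ≤ D) :
    Real.exp (-(190 * S * (Real.log M(G) + G.natDegree * (Real.log S + 4)))) ≤
      ‖aeval twoPiI G‖ := by
  have hconst (F : ℤ[X]) (hF : F ≠ 0) (hF0 : F.natDegree = 0) :
      Real.exp (-(190 * S * (Real.log M(F) + F.natDegree * (Real.log S + 4)))) ≤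
        ‖aeval twoPiI F‖ := by
    have hM : 0 ≤ Real.log M(F) := Real.log_nonneg (one_le_mahlerMeasure_of_ne_zero hF)
    refine le_trans (Real.exp_le_one_iff.mpr (neg_nonpos.mpr ?_))
      (one_le_norm_aeval_of_natDegree_eq_zero hF hF0 twoPiI)
    have := Real.log_natCast_nonneg S
    positivity
  induction G using WfDvdMonoid.induction_on_irreducible with
  | zero => exact absurd rfl hG
  | unit u hu => exact hconst u hG (natDegree_eq_zero_of_isUnit hu)
  | mul F Q hF hQ ih =>
    have hdeg : (Q * F).natDegree = Q.natDegree + F.natDegree := natDegree_mul hQ.ne_zero hF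
    have hboundF := ih hF (by lia)
    have hboundQ : Real.exp (-(190 * S * (Real.log M(Q) + Q.natDegree * (Real.log S + 4)))) ≤
        ‖aeval twoPiI Q‖ := by
      by_cases hQ0 : Q.natDegree = 0
      · exact hconst Q hQ.ne_zero hQ0
      · exact exp_neg_le_norm_aeval_of_irreducible hQ hQ0 hD (by lia) hS
    have hMF : 1 ≤ M(F) := one_le_mahlerMeasure_of_ne_zero hF
    have hMQ : 1 ≤ M(Q) := one_le_mahlerMeasure_of_ne_zero hQ.ne_zero
    rw [map_mul, norm_mul, hdeg, mapMahlerMeasure_mul, Real.log_mul (by linarith) (by linarith)]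
    refine le_trans (le_of_eq ?_) (mul_le_mul hboundQ hboundF (Real.exp_pos _).le (norm_nonneg _))
    rw [← Real.exp_add]
    push_cast
    ring_nf

/-! ### From the period to `π` -/

theorem expand_contract_mul_comp_neg_X {R : Type*} [CommRing R] [IsAddTorsionFree R] (Q : R[X]) :
    expand R 2 (contract 2 (Q * Q.comp (-X))) = Q * Q.comp (-X) := by
  have heven : (Q * Q.comp (-X)).comp (C (-1) * X) = Q * Q.comp (-X) := by
    rw [C_neg, C_1, neg_one_mul, mul_comp, comp_neg_X_comp_neg_X, mul_comm]
  ext n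
  rw [coeff_expand two_pos, coeff_contract two_ne_zero]
  split_ifs with hn
  · rw [Nat.div_mul_cancel hn]
  · have hodd := comp_C_mul_X_coeff (p := Q * Q.comp (-X)) (r := -1) (n := n)
    rw [heven, (Nat.not_even_iff_odd.mp (mt even_iff_two_dvd.mp hn)).neg_one_pow, mul_neg_one]
      at hodd
    exact (self_eq_neg.mp hodd).symm

theorem exists_map_eq_comp_I_mul_comp_neg_I (Q : ℤ[X]) :
    ∃ G : ℤ[X], G.map (algebraMap ℤ ℂ) =
      (Q.map (algebraMap ℤ ℂ)).comp (C Complex.I * X) *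
        (Q.map (algebraMap ℤ ℂ)).comp (C (-Complex.I) * X) := by
  refine ⟨expand ℤ 2 ((contract 2 (Q * Q.comp (-X))).comp (-X)), Polynomial.funext fun y => ?_⟩
  have hsq : -y ^ 2 = (Complex.I * y) ^ 2 := by rw [mul_pow, Complex.I_sq, neg_one_mul]
  rw [eval_map_algebraMap, expand_aeval, aeval_comp, map_neg, aeval_X, hsq, ← expand_aeval,
    expand_contract_mul_comp_neg_X, map_mul, aeval_comp, map_neg, aeval_X]
  simp only [eval_mul, eval_comp, eval_C, eval_X, eval_map_algebraMap, neg_mul]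

theorem polyLength_nonneg (P : ℤ[X]) : 0 ≤ polyLength P :=
  Finset.sum_nonneg fun _ _ => abs_nonneg _

theorem mahlerMeasure_map_comp_C_mul_X_le (Q : ℤ[X]) {σ : ℂ} (hσ : ‖σ‖ = 1) :
    ((Q.map (algebraMap ℤ ℂ)).comp (C σ * X)).mahlerMeasure ≤ polyLength Q := by
  have hσ0 : σ ≠ 0 := norm_ne_zero_iff.mp (hσ ▸ one_ne_zero)
  refine (mahlerMeasure_le_sum_norm_coeff _).trans_eq ?_
  rw [sum_over_range _ fun _ => norm_zero, natDegree_comp, natDegree_C_mul_X _ hσ0, mul_one,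
    natDegree_map_eq_of_injective Int.cast_injective]
  refine Finset.sum_congr rfl fun j _ => ?_
  rw [comp_C_mul_X_coeff, coeff_map, norm_mul, norm_pow, hσ, one_pow, mul_one,
    eq_intCast, Complex.norm_intCast]

theorem exists_aeval_eq_aeval_I_mul_mul {Q : ℤ[X]} (hQ : Q ≠ 0) :
    ∃ G : ℤ[X], G ≠ 0 ∧ G.natDegree = 2 * Q.natDegree ∧ M(G) ≤ polyLength Q ^ 2 ∧
      ∀ y : ℂ, aeval y G = aeval (Complex.I * y) Q * aeval (-Complex.I * y) Q := by
  obtain ⟨G, hG⟩ := exists_map_eq_comp_I_mul_comp_neg_I Q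
  have hinj : Function.Injective (algebraMap ℤ ℂ) := Int.cast_injective
  have hnegI : -Complex.I ≠ 0 := neg_ne_zero.mpr Complex.I_ne_zero
  have hcomp {σ : ℂ} (hσ : σ ≠ 0) : (Q.map (algebraMap ℤ ℂ)).comp (C σ * X) ≠ 0 :=
    (comp_C_mul_X_eq_zero_iff (mem_nonZeroDivisors_of_ne_zero hσ)).not.mpr
      ((Polynomial.map_ne_zero_iff hinj).mpr hQ)
  refine ⟨G, ?_, ?_, ?_, fun y => ?_⟩
  · rw [← Polynomial.map_ne_zero_iff hinj, hG]
    exact mul_ne_zero (hcomp Complex.I_ne_zero) (hcomp hnegI)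
  · rw [← natDegree_map_eq_of_injective hinj, hG,
      natDegree_mul (hcomp Complex.I_ne_zero) (hcomp hnegI), natDegree_comp, natDegree_comp,
      natDegree_C_mul_X _ Complex.I_ne_zero, natDegree_C_mul_X _ hnegI,
      natDegree_map_eq_of_injective hinj, mul_one, two_mul]
  · have hI := mahlerMeasure_map_comp_C_mul_X_le Q Complex.norm_I
    rw [mapMahlerMeasure_eq, ← algebraMap_int_eq, hG, mahlerMeasure_mul, sq]
    exact mul_le_mul hI (mahlerMeasure_map_comp_C_mul_X_le Q (by rw [norm_neg, Complex.norm_I]))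
      (mahlerMeasure_nonneg _) ((mahlerMeasure_nonneg _).trans hI)
  · rw [← eval_map_algebraMap, hG]
    simp only [eval_mul, eval_comp, eval_C, eval_X, eval_map_algebraMap]

theorem polyLength_scaleRoots_le (P : ℤ[X]) {s : ℤ} (hs : s ≠ 0) :
    polyLength (P.scaleRoots s) ≤ |(s : ℝ)| ^ P.natDegree * polyLength P := by
  have hs1 : 1 ≤ |(s : ℝ)| := by exact_mod_cast Int.one_le_abs hs
  rw [polyLength, polyLength, natDegree_scaleRoots, Finset.mul_sum]
  refine Finset.sum_le_sum fun j _ => ?_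
  rw [coeff_scaleRoots, Int.cast_mul, Int.cast_pow, abs_mul, abs_pow, mul_comm]
  exact mul_le_mul_of_nonneg_right (pow_le_pow_right₀ hs1 (Nat.sub_le _ _)) (abs_nonneg _)

theorem norm_aeval_le_polyLength_mul {A : Type*} [NormedRing A] [NormOneClass A] (P : ℤ[X]) {y : A}
    (hy : 1 ≤ ‖y‖) : ‖aeval y P‖ ≤ polyLength P * ‖y‖ ^ P.natDegree := by
  rw [aeval_eq_sum_range, polyLength, Finset.sum_mul]
  refine norm_sum_le_of_le _ fun j hj => (norm_zsmul_le _ _).trans ?_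
  rw [Int.norm_eq_abs]
  exact mul_le_mul_of_nonneg_left ((norm_pow_le y j).trans
    (pow_le_pow_right₀ hy (Finset.mem_range_succ_iff.mp hj))) (abs_nonneg _)

theorem norm_aeval_scaleRoots_two (P : ℤ[X]) (x : ℝ) :
    ‖aeval ((2 * x : ℝ) : ℂ) (P.scaleRoots 2)‖ = 2 ^ P.natDegree * |aeval x P| := by
  have hscale : aeval (2 * x) (P.scaleRoots 2) = 2 ^ P.natDegree * aeval x P := by
    simpa [aeval_def] using scaleRoots_eval₂_mul (p := P) (algebraMap ℤ ℝ) x 2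
  rw [← Complex.coe_algebraMap, aeval_algebraMap_apply, hscale, norm_algebraMap', norm_mul,
    norm_pow, Real.norm_ofNat, Real.norm_eq_abs]

-- `G` is `4 ^ deg P * P (X / 2i) * P (-X / 2i)`.
theorem exists_norm_aeval_twoPiI_eq {P : ℤ[X]} (hP : P ≠ 0) :
    ∃ G : ℤ[X], G ≠ 0 ∧ G.natDegree = 2 * P.natDegree ∧
      M(G) ≤ (2 ^ P.natDegree * polyLength P) ^ 2 ∧
      ‖aeval twoPiI G‖ = 4 ^ P.natDegree * |aeval (-Real.pi) P| * |aeval Real.pi P| := by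
  obtain ⟨G, hG0, hdeg, hM, hG⟩ := exists_aeval_eq_aeval_I_mul_mul (scaleRoots_ne_zero hP 2)
  have hlen := polyLength_scaleRoots_le P two_ne_zero
  rw [Int.cast_ofNat, abs_two] at hlen
  have hneg : Complex.I * twoPiI = ((2 * -Real.pi : ℝ) : ℂ) := by
    rw [twoPiI]
    push_cast
    linear_combination 2 * (Real.pi : ℂ) * Complex.I_sq
  have hpos : -Complex.I * twoPiI = ((2 * Real.pi : ℝ) : ℂ) := by
    rw [neg_mul, hneg]
    push_cast
    ring
  refine ⟨G, hG0, natDegree_scaleRoots P 2 ▸ hdeg,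
    hM.trans (pow_le_pow_left₀ (polyLength_nonneg _) hlen 2), ?_⟩
  rw [hG, hneg, hpos, norm_mul, norm_aeval_scaleRoots_two, norm_aeval_scaleRoots_two,
    show (4 : ℝ) = 2 * 2 by norm_num, mul_pow]
  ring

theorem exp_neg_le_abs_aeval_pi {P : ℤ[X]} (hP : P ≠ 0) {d : ℕ} (hd : P.natDegree ≤ d)
    (hd0 : 0 < d) {L : ℝ} (hL : polyLength P ≤ L) (hL1 : 1 ≤ L) {S : ℕ}
    (hS : 60 * (2 * d * (1 + Real.log (2 * d))) ≤ S) :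
    Real.exp (-(190 * S * (2 * (d * Real.log 2 + Real.log L) + 2 * d * (Real.log S + 4)) +
        (d * Real.log 4 + Real.log L + d * Real.log Real.pi))) ≤ |aeval Real.pi P| := by
  obtain ⟨G, hG0, hGdeg, hGM, hGval⟩ := exists_norm_aeval_twoPiI_eq hP
  have hpi : 1 ≤ Real.pi := by linarith [Real.pi_gt_three]
  have hlen := polyLength_nonneg P
  have hdeg : (G.natDegree : ℝ) ≤ 2 * d := by rw [hGdeg]; exact_mod_cast Nat.mul_le_mul_left 2 hd
  have hM : Real.log M(G) ≤ 2 * (d * Real.log 2 + Real.log L) := by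
    have hM1 : 1 ≤ M(G) := one_le_mahlerMeasure_of_ne_zero hG0
    have hM2 : M(G) ≤ (2 ^ d * L) ^ 2 := hGM.trans (by gcongr; norm_num)
    have := Real.log_le_log (by linarith) hM2
    rw [Real.log_pow, Real.log_mul (by positivity) (by positivity), Real.log_pow] at this
    exact_mod_cast this
  have hneg : |aeval (-Real.pi) P| ≤ L * Real.pi ^ d := by
    have := norm_aeval_le_polyLength_mul P (y := -Real.pi)
      (by rwa [norm_neg, Real.norm_of_nonneg Real.pi_nonneg])
    rw [norm_neg, Real.norm_of_nonneg Real.pi_nonneg] at this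
    exact this.trans (by gcongr)
  have hfactor : Real.exp (d * Real.log 4 + Real.log L + d * Real.log Real.pi) =
      4 ^ d * (L * Real.pi ^ d) := by
    rw [Real.exp_add, Real.exp_add, Real.exp_log (by positivity), Real.exp_nat_mul,
      Real.exp_nat_mul, Real.exp_log Real.pi_pos, Real.exp_log (by norm_num), mul_assoc]
  rw [neg_add, Real.exp_add, Real.exp_neg (_ + _ + _), ← div_eq_mul_inv,
    div_le_iff₀' (by positivity), hfactor]
  calc Real.exp (-(190 * S * (2 * (d * Real.log 2 + Real.log L) + 2 * d * (Real.log S + 4))))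
      ≤ Real.exp (-(190 * S * (Real.log M(G) + G.natDegree * (Real.log S + 4)))) := by gcongr
    _ ≤ ‖aeval twoPiI G‖ :=
        exp_neg_le_norm_aeval_twoPiI (D := 2 * d) (by lia) (by exact_mod_cast hS) hG0 (by lia)
    _ ≤ 4 ^ d * (L * Real.pi ^ d) * |aeval Real.pi P| := by
        rw [hGval]
        gcongr
        norm_num

theorem natCast_le_one_add_mul_log (d : ℕ) : (d : ℝ) ≤ 1 + 1.45 * (d * Real.log d) := by
  rcases lt_or_ge d 2 with hd | hd
  · interval_cases d <;> norm_num
  · have := nat_mul_le_log_of_two_pow_le (n := 1) (x := d) (by exact_mod_cast hd)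
    push_cast at this
    nlinarith

section Constants

variable {d : ℕ} {S : ℝ}

theorem le_mul_one_add_log_of_le_sixty_mul (hd : 0 < d)
    (hS : S ≤ 60 * (2 * d * (1 + Real.log (2 * d))) + 1) :
    S ≤ d * (204.2 * (1 + Real.log d)) := by
  have hd1 : (1 : ℝ) ≤ d := by exact_mod_cast hd
  have hlogd := Real.log_natCast_nonneg d
  rw [Real.log_mul two_ne_zero (by positivity)] at hS
  nlinarith [Real.log_two_lt_d9]

theorem log_le_of_le_sixty_mul (hd : 0 < d) (hS0 : 0 < S)
    (hS : S ≤ 60 * (2 * d * (1 + Real.log (2 * d))) + 1) :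
    Real.log S ≤ 5.55 + 2 * Real.log d := by
  have hlogd := Real.log_natCast_nonneg d
  have hlog := Real.log_le_log hS0 (le_mul_one_add_log_of_le_sixty_mul hd hS)
  have hconst := log_le_nat_mul_of_le_two_pow (x := 204.2) (n := 8) (by norm_num) (by norm_num)
  have hlogone := Real.log_le_sub_one_of_pos (show 0 < 1 + Real.log d by linarith)
  rw [Real.log_mul (by positivity) (by positivity), Real.log_mul (by norm_num) (by positivity)]
    at hlog
  push_cast at hconst
  linarith

theorem descent_cost_le (hd : 0 < d) {l : ℝ} (hl : 1 ≤ l) (hS1 : 1 ≤ S)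
    (hS : S ≤ 60 * (2 * d * (1 + Real.log (2 * d))) + 1) :
    190 * S * (2 * (d * Real.log 2 + l) + 2 * d * (Real.log S + 4)) +
        (d * Real.log 4 + l + d * Real.log Real.pi) ≤
      2000000 * d * (l + d * Real.log d) * (1 + Real.log d) := by
  have hd1 : (1 : ℝ) ≤ d := by exact_mod_cast hd
  have hlogd := Real.log_natCast_nonneg d
  have hlogS := Real.log_nonneg hS1
  have hdlog := natCast_le_one_add_mul_log d
  have hheight : 2 * (d * Real.log 2 + l) + 2 * d * (Real.log S + 4) ≤
      23 * l + 35 * (d * Real.log d) := by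
    nlinarith [Real.log_two_lt_d9, hlogd, log_le_of_le_sixty_mul hd (by linarith) hS]
  have hmain : 190 * S * (2 * (d * Real.log 2 + l) + 2 * d * (Real.log S + 4)) ≤
      190 * (d * (204.2 * (1 + Real.log d))) * (23 * l + 35 * (d * Real.log d)) := by
    have := le_mul_one_add_log_of_le_sixty_mul hd hS
    gcongr
  have hrest : d * Real.log 4 + l + d * Real.log Real.pi ≤ 5 * l + 6 * (d * Real.log d) := by
    have hlog4 := log_le_nat_mul_of_le_two_pow (x := 4) (n := 2) (by norm_num) (by norm_num)
    have hlogpi := log_le_nat_mul_of_le_two_pow (x := Real.pi) (n := 2) Real.pi_pos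
      (by linarith [Real.pi_lt_four])
    push_cast at hlog4 hlogpi
    nlinarith
  have hrest' : 5 * l + 6 * (d * Real.log d) ≤
      (5 * l + 6 * (d * Real.log d)) * (d * (1 + Real.log d)) :=
    le_mul_of_one_le_right (by positivity) (by nlinarith)
  have hl' : 0 ≤ d * (1 + Real.log d) * l := by positivity
  have hdlog' : 0 ≤ d * (1 + Real.log d) * (d * Real.log d) := by positivity
  linarith only [hmain, hrest, hrest', hl', hdlog']

end Constants

/-- **Theorem 2, part 2.** For a nonzero `P ∈ ℤ[x]` with `deg P ≤ d`, `L(P) ≤ L`, `L ≥ 3`: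
`|P(π)| ≥ exp(−2·10⁶ d (log L + d log d) (1 + log d))`. -/
theorem pi_transcendence_measure (P : Polynomial ℤ) (hP : P ≠ 0)
    (d : ℕ) (hd : P.natDegree ≤ d)
    (L : ℝ) (hL : polyLength P ≤ L) (hL3 : 3 ≤ L) :
    Real.exp (-(2000000 * d * (Real.log L + d * Real.log d) * (1 + Real.log d))) ≤
      |Polynomial.aeval Real.pi P| := by
  rcases Nat.eq_zero_or_pos d with rfl | hd0
  · simpa using one_le_norm_aeval_of_natDegree_eq_zero hP (Nat.le_zero.mp hd) Real.pi
  set S := ⌈60 * (2 * d * (1 + Real.log (2 * d)))⌉₊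
  have hd1 : (1 : ℝ) ≤ d := by exact_mod_cast hd0
  have hlog2d : 0 ≤ Real.log (2 * d) := Real.log_nonneg (by linarith)
  have hS : 60 * (2 * d * (1 + Real.log (2 * d))) ≤ S := Nat.le_ceil _
  have hlogL : 1 ≤ Real.log L := by
    linarith [Real.log_three_gt_d9, Real.log_le_log three_pos hL3]
  refine (Real.exp_le_exp.mpr (neg_le_neg ?_)).trans
    (exp_neg_le_abs_aeval_pi hP hd hd0 hL (by linarith) hS)
  exact descent_cost_le hd0 hlogL (by nlinarith) (Nat.ceil_lt_add_one (by positivity)).le
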